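/- For every K > 0 there exists a constant α > 0 depending only on K with the following property. For all positive integers n and d with d ≤ (1/2)·n^{2/3}, if A is drawn uniformly at random from the nonempty set of all matrices in {0,1}^{n×n} whose rows each sum to d and whose columns each sum to d (the adjacency matrices of d-regular digraphs on n vertices), then ℙ(σ₂(A) ≤ α·√d) ≥ 1 − n^{−K} − e^{−n}, where σ₂(A) is the second largest singular value of A (singular values counted with multiplicity). -/

import Mathlib

open scoped Classical BigOperators

noncomputable section

/-- The set of adjacency matrices of `d`-regular digraphs on `n` vertices:
0-1 matrices with all row sums and all column sums equal to `d`. -/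
def RegDigraph (n d : ℕ) : Finset (Fin n → Fin n → Bool) :=
  Finset.univ.filter fun X =>
    (∀ u, (∑ v, if X u v then 1 else 0) = d) ∧
    (∀ v, (∑ u, if X u v then 1 else 0) = d)

/-- The adjacency matrix as a real matrix. -/
def adjR {n : ℕ} (X : Fin n → Fin n → Bool) : Matrix (Fin n) (Fin n) ℝ :=
  Matrix.of fun u v => if X u v then (1 : ℝ) else 0

/-!
Simple switchings act on the set of `d`-regular digraphs reversibly with respect to the uniform
measure. Exchanging each switching with its inverse gives two kinds of concentration: exponential
moments of linear statistics `⟨Q, A⟩` with small entries, by a Stein-type differential inequality,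
and Poisson-type upper tails for edge counts, hence a discrepancy property. The first inequality
involves weighted counts of 3-walks, and `8 d ^ 3 ≤ n ^ 2` is what keeps their contribution of the
order of the variance.

As in the argument of Kahn and Szemerédi, the bilinear form of `A - (d / n) J`, where `J` is the
all-ones matrix, is bounded over a net of the unit ball: linear concentration and a union bound
control the light pairs, those with `|x u * y v| ≤ √d / n`, and discrepancy controls the heavy ones
simultaneously for all vectors. This gives `‖A - (d / n) J‖ = O(√d)`. The two matrices agree on the
hyperplane orthogonal to the constants, so the min-max principle bounds `σ₂(A)` by that norm.
-/

/-! ### Regular digraphs and switchings -/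

section Switching

open Finset Matrix

variable {n d : ℕ} {X : Fin n → Fin n → Bool}

lemma adjR_apply (X : Fin n → Fin n → Bool) (u v : Fin n) :
    adjR X u v = if X u v then 1 else 0 := rfl

lemma adjR_nonneg (X : Fin n → Fin n → Bool) (u v : Fin n) : 0 ≤ adjR X u v := by
  rw [adjR_apply]; split_ifs <;> norm_num

lemma adjR_sq (X : Fin n → Fin n → Bool) (u v : Fin n) : adjR X u v ^ 2 = adjR X u v := by
  rw [adjR_apply]; split_ifs <;> norm_num

lemma mem_regDigraph_iff :
    X ∈ RegDigraph n d ↔ (∀ u, ∑ v, adjR X u v = d) ∧ ∀ v, ∑ u, adjR X u v = d := by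
  simp only [RegDigraph, adjR_apply, mem_filter, mem_univ, true_and, sum_boole, Nat.cast_inj,
    Nat.cast_id]

lemma sum_adjR_row (hX : X ∈ RegDigraph n d) (u : Fin n) : ∑ v, adjR X u v = d :=
  (mem_regDigraph_iff.1 hX).1 u

lemma sum_adjR_col (hX : X ∈ RegDigraph n d) (v : Fin n) : ∑ u, adjR X u v = d :=
  (mem_regDigraph_iff.1 hX).2 v

lemma sum_adjR (hX : X ∈ RegDigraph n d) : ∑ u, ∑ v, adjR X u v = n * d := by
  simp [sum_adjR_row hX]

lemma sum_adjR_col_mul_row (hX : X ∈ RegDigraph n d) (u v : Fin n) :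
    ∑ u', ∑ v', adjR X u v' * adjR X u' v = (d : ℝ) ^ 2 := by
  simp only [← sum_mul, ← mul_sum, sum_adjR_row hX, sum_adjR_col hX, sq]

lemma sum_adjR_mul_row (hX : X ∈ RegDigraph n d) (u : Fin n) :
    ∑ u', ∑ v', adjR X u' v' * adjR X u v' = (d : ℝ) ^ 2 := by
  rw [sum_comm]
  simp only [← sum_mul, ← mul_sum, sum_adjR_row hX, sum_adjR_col hX, sq]

lemma sum_adjR_mul_col (hX : X ∈ RegDigraph n d) (v : Fin n) :
    ∑ u', ∑ v', adjR X u' v' * adjR X u' v = (d : ℝ) ^ 2 := by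
  simp only [← sum_mul, ← mul_sum, sum_adjR_row hX, sum_adjR_col hX, sq]

/-- Toggling the four entries of `X` in the rows `u, u'` and columns `v, v'`. On a `Switchable`
quadruple this replaces the edges `(u, v), (u', v')` by `(u, v'), (u', v)`. -/
def switch (X : Fin n → Fin n → Bool) (u v u' v' : Fin n) : Fin n → Fin n → Bool :=
  fun i j => if (i = u ∨ i = u') ∧ (j = v ∨ j = v') then !X i j else X i j

/-- `(u, v)` and `(u', v')` are edges of `X` while `(u, v')` and `(u', v)` are not: the situation
in which `switch X u v u' v'` is a simple switching. -/
def Switchable (X : Fin n → Fin n → Bool) (u v u' v' : Fin n) : Prop :=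
  X u v = true ∧ X u' v' = true ∧ X u v' = false ∧ X u' v = false

/-- The indicator of `Switchable`, as a real number. -/
def switchInd (X : Fin n → Fin n → Bool) (u v u' v' : Fin n) : ℝ :=
  if Switchable X u v u' v' then 1 else 0

lemma switchInd_eq (X : Fin n → Fin n → Bool) (u v u' v' : Fin n) :
    switchInd X u v u' v' =
      adjR X u v * adjR X u' v' * (1 - adjR X u v') * (1 - adjR X u' v) := by
  cases h₁ : X u v <;> cases h₂ : X u' v' <;> cases h₃ : X u v' <;> cases h₄ : X u' v <;>
    simp [switchInd, Switchable, adjR_apply, *]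

lemma switchInd_le (X : Fin n → Fin n → Bool) (u v u' v' : Fin n) :
    switchInd X u v u' v' ≤ adjR X u v * adjR X u' v' := by
  cases h₁ : X u v <;> cases h₂ : X u' v' <;> cases h₃ : X u v' <;> cases h₄ : X u' v <;>
    simp [switchInd, Switchable, adjR_apply, *]

lemma le_switchInd (X : Fin n → Fin n → Bool) (u v u' v' : Fin n) :
    adjR X u v * (adjR X u' v' - adjR X u' v' * adjR X u v' - adjR X u' v' * adjR X u' v) ≤
      switchInd X u v u' v' := by
  cases h₁ : X u v <;> cases h₂ : X u' v' <;> cases h₃ : X u v' <;> cases h₄ : X u' v <;>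
    simp [switchInd, Switchable, adjR_apply, *]

lemma Switchable.ne_row {u v u' v' : Fin n} (h : Switchable X u v u' v') : u ≠ u' := by
  rintro rfl; exact Bool.false_ne_true (h.2.2.2.symm.trans h.1)

lemma Switchable.ne_col {u v u' v' : Fin n} (h : Switchable X u v u' v') : v ≠ v' := by
  rintro rfl; exact Bool.false_ne_true (h.2.2.1.symm.trans h.1)

lemma switch_switch (X : Fin n → Fin n → Bool) (u v u' v' : Fin n) :
    switch (switch X u v u' v') u v' u' v = X := by
  funext i j
  simp only [switch, or_comm (a := j = v')]
  split_ifs <;> simp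

lemma Switchable.switchable_switch {u v u' v' : Fin n} (h : Switchable X u v u' v') :
    Switchable (switch X u v u' v') u v' u' v := by
  obtain ⟨h₁, h₂, h₃, h₄⟩ := h
  simp [Switchable, switch, *]

lemma adjR_switch {u v u' v' : Fin n} (h : Switchable X u v u' v') :
    adjR (switch X u v u' v') = adjR X -
      vecMulVec (Pi.single u 1 - Pi.single u' 1) (Pi.single v 1 - Pi.single v' 1) := by
  have hu := h.ne_row
  have hv := h.ne_col
  obtain ⟨h₁, h₂, h₃, h₄⟩ := h
  ext i j
  simp only [Matrix.sub_apply, vecMulVec_apply, Pi.sub_apply, Pi.single_apply, adjR_apply,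
    switch]
  by_cases hiu : i = u <;> by_cases hiu' : i = u' <;> by_cases hjv : j = v <;>
    by_cases hjv' : j = v' <;> simp_all

lemma switch_mem_regDigraph {u v u' v' : Fin n} (h : Switchable X u v u' v')
    (hX : X ∈ RegDigraph n d) : switch X u v u' v' ∈ RegDigraph n d := by
  rw [mem_regDigraph_iff]
  simp only [adjR_switch h, Matrix.sub_apply, vecMulVec_apply, sum_sub_distrib, ← mul_sum,
    ← sum_mul, Pi.sub_apply, sum_pi_single', mem_univ, if_true, sub_self, mul_zero, zero_mul,
    sub_zero, sum_adjR_row hX, sum_adjR_col hX, implies_true, and_self]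

/-- Simple switchings pair the regular digraphs containing `(u, v), (u', v')` with those
containing `(u, v'), (u', v)`. -/
lemma sum_switchInd_mul (u v u' v' : Fin n) (F : (Fin n → Fin n → Bool) → ℝ) :
    ∑ X ∈ RegDigraph n d, switchInd X u v u' v' * F X =
      ∑ X ∈ RegDigraph n d, switchInd X u v' u' v * F (switch X u v' u' v) := by
  simp only [switchInd, ite_mul, one_mul, zero_mul, ← sum_filter]
  refine sum_nbij' (fun X => switch X u v u' v') (fun X => switch X u v' u' v) ?_ ?_
    (fun X _ => switch_switch ..) (fun X _ => switch_switch ..) (fun X _ => ?_)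
  · simp only [mem_filter]
    exact fun X hX => ⟨switch_mem_regDigraph hX.2 hX.1, hX.2.switchable_switch⟩
  · simp only [mem_filter]
    exact fun X hX => ⟨switch_mem_regDigraph hX.2 hX.1, hX.2.switchable_switch⟩
  · rw [switch_switch]

lemma sum_sum_switchInd_mul (u v : Fin n) (F : (Fin n → Fin n → Bool) → ℝ) :
    ∑ X ∈ RegDigraph n d, (∑ u', ∑ v', switchInd X u v u' v') * F X =
      ∑ X ∈ RegDigraph n d, ∑ u', ∑ v', switchInd X u v' u' v * F (switch X u v' u' v) := by
  simp only [sum_mul]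
  rw [sum_comm, sum_comm (s := RegDigraph n d)]
  refine sum_congr rfl fun u' _ => ?_
  rw [sum_comm, sum_comm (s := RegDigraph n d)]
  exact sum_congr rfl fun v' _ => sum_switchInd_mul u v u' v' F

end Switching

/-! ### Exponential moments -/

section ExponentialMoments

open Finset Real

lemma sum_exp_mul_le {ι : Type*} (s : Finset ι) (f : ι → ℝ) {B t₀ : ℝ} (ht₀ : 0 ≤ t₀)
    (h : ∀ t ∈ Set.Ico 0 t₀, ∑ i ∈ s, f i * exp (t * f i) ≤ B * ∑ i ∈ s, exp (t * f i)) :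
    ∑ i ∈ s, exp (t₀ * f i) ≤ #s * exp (B * t₀) := by
  have hderiv : ∀ t, HasDerivAt (fun t => ∑ i ∈ s, exp (t * f i))
      (∑ i ∈ s, f i * exp (t * f i)) t := fun t => by
    refine HasDerivAt.fun_sum fun i _ => ?_
    simpa [mul_comm] using ((hasDerivAt_id t).mul_const (f i)).exp
  have hgronwall := le_gronwallBound_of_liminf_deriv_right_le (δ := #s) (ε := 0)
    (fun t _ => (hderiv t).continuousAt.continuousWithinAt)
    (fun t _ _ => (hderiv t).hasDerivWithinAt.liminf_right_slope_le)
    (by simp) (fun t ht => (h t ht).trans_eq (add_zero _).symm) t₀ (Set.right_mem_Icc.2 ht₀)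
  rwa [gronwallBound_ε0, sub_zero] at hgronwall

lemma card_filter_le_sum_exp {ι : Type*} (s : Finset ι) (f : ι → ℝ) {t : ℝ} (ht : 0 ≤ t)
    (r : ℝ) : (#{i ∈ s | r ≤ f i} : ℝ) ≤ exp (-(t * r)) * ∑ i ∈ s, exp (t * f i) := by
  rw [card_filter, Nat.cast_sum, mul_sum]
  refine sum_le_sum fun i _ => ?_
  rw [← exp_add]
  split_ifs with hi
  · rw [Nat.cast_one, one_le_exp_iff]
    nlinarith
  · exact_mod_cast (exp_pos _).le

lemma card_filter_le_exp {ι : Type*} (s : Finset ι) (f : ι → ℝ) {B t₀ : ℝ} (r : ℝ)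
    (ht₀ : 0 ≤ t₀)
    (h : ∀ t ∈ Set.Ico 0 t₀, ∑ i ∈ s, f i * exp (t * f i) ≤ B * ∑ i ∈ s, exp (t * f i)) :
    (#{i ∈ s | r ≤ f i} : ℝ) ≤ exp ((B - r) * t₀) * #s :=
  calc (#{i ∈ s | r ≤ f i} : ℝ) ≤ exp (-(t₀ * r)) * ∑ i ∈ s, exp (t₀ * f i) :=
        card_filter_le_sum_exp s f ht₀ r
    _ ≤ exp (-(t₀ * r)) * (#s * exp (B * t₀)) := by gcongr; exact sum_exp_mul_le s f ht₀ h
    _ = exp ((B - r) * t₀) * #s := by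
        rw [mul_left_comm, ← exp_add, mul_comm]
        ring_nf

end ExponentialMoments

/-! ### Weighted edge and walk counts -/

section FrobeniusPairing

open Finset Matrix

variable {m n : Type*} [Fintype m] [Fintype n]

/-- The Frobenius pairing `⟨Q, A⟩ = tr (Qᵀ A)` of two real matrices. With `A` an adjacency matrix
it is the `Q`-weighted number of edges. -/
def frobInner (Q A : Matrix m n ℝ) : ℝ := ∑ u, ∑ v, Q u v * A u v

lemma frobInner_sub (Q A B : Matrix m n ℝ) :
    frobInner Q (A - B) = frobInner Q A - frobInner Q B := by
  simp only [frobInner, Matrix.sub_apply, mul_sub, sum_sub_distrib]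

lemma frobInner_vecMulVec (Q : Matrix m n ℝ) (x : m → ℝ) (y : n → ℝ) :
    frobInner Q (vecMulVec x y) = x ⬝ᵥ Q *ᵥ y := by
  simp only [frobInner, vecMulVec_apply, dotProduct, mulVec, mul_sum, mul_left_comm]

lemma sum_frobInner_mul_le_of_nonneg {ι : Type*} {s : Finset ι} {R : Matrix m n ℝ}
    (hR : ∀ u v, 0 ≤ R u v) (M : ι → Matrix m n ℝ) (F : ι → ℝ) {C : ℝ}
    (h : ∀ u v, ∑ i ∈ s, M i u v * F i ≤ C) :
    ∑ i ∈ s, frobInner R (M i) * F i ≤ (∑ u, ∑ v, R u v) * C := by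
  simp only [frobInner, sum_mul]
  rw [sum_comm]
  refine sum_le_sum fun u _ => ?_
  rw [sum_comm]
  refine sum_le_sum fun v _ => ?_
  simp only [mul_assoc, ← mul_sum]
  exact mul_le_mul_of_nonneg_left (h u v) (hR u v)

end FrobeniusPairing

section SwitchGrowth

open Finset Matrix

variable {n d : ℕ} {c : ℝ} {F : (Fin n → Fin n → Bool) → ℝ}

lemma frobInner_adjR_switch (Q : Matrix (Fin n) (Fin n) ℝ) {X : Fin n → Fin n → Bool}
    {u v u' v' : Fin n} (h : Switchable X u v u' v') :
    frobInner Q (adjR (switch X u v u' v')) =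
      frobInner Q (adjR X) + (Q u v' + Q u' v - Q u v - Q u' v') := by
  rw [adjR_switch h, frobInner_sub, frobInner_vecMulVec]
  simp only [mulVec_sub, mulVec_single_one, sub_dotProduct, dotProduct_sub, single_dotProduct,
    one_mul, col_apply]
  ring

/-- A nonnegative weight on digraphs which a single switching multiplies by at most `c`. -/
structure SwitchGrowth (c : ℝ) (F : (Fin n → Fin n → Bool) → ℝ) : Prop where
  nonneg : ∀ X, 0 ≤ F X
  switch_le : ∀ X u v u' v', Switchable X u v u' v' → F (switch X u v u' v') ≤ c * F X

lemma SwitchGrowth.exp_frobInner {Q : Matrix (Fin n) (Fin n) ℝ} {b t : ℝ} (ht : 0 ≤ t)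
    (hQ : ∀ u v u' v', Q u v' + Q u' v - Q u v - Q u' v' ≤ b) :
    SwitchGrowth (Real.exp (t * b)) fun X => Real.exp (t * frobInner Q (adjR X)) where
  nonneg _ := (Real.exp_pos _).le
  switch_le X u v u' v' h := by
    rw [frobInner_adjR_switch Q h, ← Real.exp_add, mul_add, add_comm]
    gcongr
    exact hQ u v u' v'

lemma adjR_mul_le_sum_switchInd (hnd : 8 * d ≤ 3 * n) {X : Fin n → Fin n → Bool}
    (hX : X ∈ RegDigraph n d) (u v : Fin n) :
    adjR X u v * (n * d / 4) ≤ ∑ u', ∑ v', switchInd X u v u' v' := by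
  have hnd' : (8 : ℝ) * d ≤ 3 * n := by exact_mod_cast hnd
  calc adjR X u v * (n * d / 4)
      ≤ adjR X u v * (n * d - d ^ 2 - d ^ 2) := by
        refine mul_le_mul_of_nonneg_left ?_ (adjR_nonneg X u v)
        nlinarith [(Nat.cast_nonneg d : (0 : ℝ) ≤ d)]
    _ = ∑ u', ∑ v', adjR X u v *
          (adjR X u' v' - adjR X u' v' * adjR X u v' - adjR X u' v' * adjR X u' v) := by
        simp only [← mul_sum, sum_sub_distrib, sum_adjR hX, sum_adjR_mul_row hX,
          sum_adjR_mul_col hX]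
    _ ≤ _ := sum_le_sum fun u' _ => sum_le_sum fun v' _ => le_switchInd X u v u' v'

/-- An edge can be switched away in about `n d` ways, and created in at most `d ^ 2` ways. -/
lemma sum_adjR_mul_le_of_switch_le (hd : 0 < d) (hnd : 8 * d ≤ 3 * n) (u v : Fin n)
    {F G : (Fin n → Fin n → Bool) → ℝ} (hF : ∀ X, 0 ≤ F X) (hG : ∀ X, 0 ≤ G X)
    (hFG : ∀ X u' v', Switchable X u v' u' v → F (switch X u v' u' v) ≤ G X) :
    n * ∑ X ∈ RegDigraph n d, adjR X u v * F X ≤ 4 * d * ∑ X ∈ RegDigraph n d, G X := by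
  have hd' : (0 : ℝ) < d := by exact_mod_cast hd
  have key : (n * d / 4 : ℝ) * (∑ X ∈ RegDigraph n d, adjR X u v * F X)
      ≤ d ^ 2 * ∑ X ∈ RegDigraph n d, G X :=
    calc (n * d / 4 : ℝ) * (∑ X ∈ RegDigraph n d, adjR X u v * F X)
        = ∑ X ∈ RegDigraph n d, adjR X u v * (n * d / 4) * F X := by
          rw [mul_sum]
          exact sum_congr rfl fun X _ => by ring
      _ ≤ ∑ X ∈ RegDigraph n d, (∑ u', ∑ v', switchInd X u v u' v') * F X := by
          gcongr with X hX
          · exact hF X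
          · exact adjR_mul_le_sum_switchInd hnd hX u v
      _ = ∑ X ∈ RegDigraph n d, ∑ u', ∑ v', switchInd X u v' u' v * F (switch X u v' u' v) :=
          sum_sum_switchInd_mul u v F
      _ ≤ ∑ X ∈ RegDigraph n d, ∑ u', ∑ v', adjR X u v' * adjR X u' v * G X := by
          refine sum_le_sum fun X _ => sum_le_sum fun u' _ => sum_le_sum fun v' _ => ?_
          by_cases h : Switchable X u v' u' v
          · exact mul_le_mul (switchInd_le ..) (hFG X u' v' h) (hF _)
              (mul_nonneg (adjR_nonneg ..) (adjR_nonneg ..))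
          · rw [switchInd, if_neg h, zero_mul]
            exact mul_nonneg (mul_nonneg (adjR_nonneg ..) (adjR_nonneg ..)) (hG X)
      _ = d ^ 2 * ∑ X ∈ RegDigraph n d, G X := by
          rw [mul_sum]
          refine sum_congr rfl fun X hX => ?_
          simp only [← sum_adjR_col_mul_row hX u v, sum_mul]
  refine le_of_mul_le_mul_left ?_ hd'
  linarith

lemma SwitchGrowth.sum_adjR_mul_le (hF : SwitchGrowth c F) (hc : 0 ≤ c) (hd : 0 < d)
    (hnd : 8 * d ≤ 3 * n) (u v : Fin n) :
    n * ∑ X ∈ RegDigraph n d, adjR X u v * F X ≤ 4 * d * c * ∑ X ∈ RegDigraph n d, F X := by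
  rw [mul_assoc, mul_sum (a := c)]
  exact sum_adjR_mul_le_of_switch_le hd hnd u v hF.nonneg (fun X => mul_nonneg hc (hF.nonneg X))
    fun X u' v' h => hF.switch_le X u v' u' v h

lemma SwitchGrowth.sum_frobInner_mul_le (hF : SwitchGrowth c F) (hc : 0 ≤ c) (hn : 0 < n)
    (hd : 0 < d) (hnd : 8 * d ≤ 3 * n) {R : Matrix (Fin n) (Fin n) ℝ} (hR : ∀ u v, 0 ≤ R u v) :
    ∑ X ∈ RegDigraph n d, frobInner R (adjR X) * F X ≤
      (∑ u, ∑ v, R u v) * (4 * c * (d / n) * ∑ X ∈ RegDigraph n d, F X) := by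
  refine sum_frobInner_mul_le_of_nonneg hR adjR F fun u v => ?_
  have hn' : (0 : ℝ) < n := by exact_mod_cast hn
  refine le_of_mul_le_mul_left ((hF.sum_adjR_mul_le hc hd hnd u v).trans_eq ?_) hn'
  field_simp

lemma Switchable.adjR_switch_col_le {X : Fin n → Fin n → Bool} {u v u' v' : Fin n}
    (h : Switchable X u v u' v') {i : Fin n} (hi : i ≠ u) :
    adjR (switch X u v u' v') i v' ≤ adjR X i v' := by
  rw [adjR_switch h, Matrix.sub_apply, vecMulVec_apply, sub_le_self_iff]
  simp only [Pi.sub_apply, Pi.single_apply, if_neg hi, if_neg h.ne_col.symm, if_true]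
  split_ifs <;> norm_num

lemma Switchable.adjR_switch_row_le {X : Fin n → Fin n → Bool} {u v u' v' : Fin n}
    (h : Switchable X u v u' v') {j : Fin n} (hj : j ≠ v') :
    adjR (switch X u v u' v') u j ≤ adjR X u j := by
  rw [adjR_switch h, Matrix.sub_apply, vecMulVec_apply, sub_le_self_iff]
  simp only [Pi.sub_apply, Pi.single_apply, if_neg hj, if_neg h.ne_row, if_true]
  split_ifs <;> norm_num

lemma adjR_threeWalk_apply (X : Fin n → Fin n → Bool) (u v : Fin n) :
    (adjR X * (adjR X)ᵀ * adjR X) u v =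
      ∑ u', ∑ v', adjR X u v' * adjR X u' v' * adjR X u' v := by
  simp only [mul_apply, transpose_apply, sum_mul]

lemma sum_sum_le_sum_erase_add {α β : Type*} [Fintype α] [Fintype β]
    [DecidableEq α] [DecidableEq β] {f : α → β → ℝ}
    (hf : ∀ u v, 0 ≤ f u v) (a : α) (b : β) :
    ∑ u, ∑ v, f u v ≤
      ∑ u ∈ univ.erase a, ∑ v ∈ univ.erase b, f u v + ∑ v, f a v + ∑ u, f u b := by
  calc ∑ u, ∑ v, f u v = ∑ u ∈ univ.erase a, ∑ v, f u v + ∑ v, f a v :=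
        (sum_erase_add _ _ (mem_univ a)).symm
    _ = ∑ u ∈ univ.erase a, ∑ v ∈ univ.erase b, f u v + ∑ u ∈ univ.erase a, f u b
          + ∑ v, f a v := by
        simp only [← sum_add_distrib, sum_erase_add _ _ (mem_univ b)]
    _ ≤ _ := by
        have := sum_le_sum_of_subset_of_nonneg (erase_subset a univ) fun u _ _ => hf u b
        linarith

lemma adjR_threeWalk_le {X : Fin n → Fin n → Bool} (hX : X ∈ RegDigraph n d) (u v : Fin n) :
    (adjR X * (adjR X)ᵀ * adjR X) u v ≤
      ∑ u' ∈ univ.erase u, ∑ v' ∈ univ.erase v, adjR X u' v' * (adjR X u v' * adjR X u' v)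
        + 2 * d * adjR X u v := by
  have hrow : ∑ v', adjR X u v' * adjR X u v' * adjR X u v = d * adjR X u v := by
    simp only [← sum_mul, ← sq, adjR_sq, sum_adjR_row hX]
  have hcol : ∑ u', adjR X u v * adjR X u' v * adjR X u' v = d * adjR X u v := by
    simp only [mul_assoc, ← mul_sum, ← sq, adjR_sq, sum_adjR_col hX, mul_comm (d : ℝ)]
  rw [adjR_threeWalk_apply]
  refine (sum_sum_le_sum_erase_add (fun u' v' => mul_nonneg (mul_nonneg (adjR_nonneg ..)
    (adjR_nonneg ..)) (adjR_nonneg ..)) u v).trans_eq ?_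
  rw [hrow, hcol, add_assoc, ← two_mul, ← mul_assoc]
  simp only [mul_comm (adjR X u _) (adjR X _ _), mul_assoc]

/-- Switching away the middle edge of the 3-walk keeps its two outer edges. -/
lemma SwitchGrowth.sum_middle_edge_le (hF : SwitchGrowth c F) (hc : 0 ≤ c) (hd : 0 < d)
    (hnd : 8 * d ≤ 3 * n) {u v u' v' : Fin n} (hu : u ≠ u') (hv : v ≠ v') :
    n * ∑ X ∈ RegDigraph n d, adjR X u' v' * (adjR X u v' * adjR X u' v * F X) ≤
      4 * d * ∑ X ∈ RegDigraph n d, adjR X u v' * adjR X u' v * (c * F X) := by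
  have h₀ : ∀ X : Fin n → Fin n → Bool, 0 ≤ adjR X u v' * adjR X u' v := fun X =>
    mul_nonneg (adjR_nonneg ..) (adjR_nonneg ..)
  refine sum_adjR_mul_le_of_switch_le hd hnd u' v' (fun X => mul_nonneg (h₀ X) (hF.nonneg X))
    (fun X => mul_nonneg (h₀ X) (mul_nonneg hc (hF.nonneg X))) fun X p q h => ?_
  gcongr
  · exact hF.nonneg _
  · exact h₀ X
  · exact adjR_nonneg ..
  · exact adjR_nonneg ..
  · exact h.adjR_switch_col_le hu
  · exact h.adjR_switch_row_le hv
  · exact hF.switch_le _ _ _ _ _ h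

lemma SwitchGrowth.sum_erase_threeWalk_mul_le (hF : SwitchGrowth c F) (hc : 0 ≤ c) (hd : 0 < d)
    (hnd : 8 * d ≤ 3 * n) (u v : Fin n) :
    n * ∑ X ∈ RegDigraph n d, (∑ u' ∈ univ.erase u, ∑ v' ∈ univ.erase v,
        adjR X u' v' * (adjR X u v' * adjR X u' v)) * F X ≤
      4 * d ^ 3 * c * ∑ X ∈ RegDigraph n d, F X :=
  calc n * ∑ X ∈ RegDigraph n d, (∑ u' ∈ univ.erase u, ∑ v' ∈ univ.erase v,
        adjR X u' v' * (adjR X u v' * adjR X u' v)) * F X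
      = ∑ u' ∈ univ.erase u, ∑ v' ∈ univ.erase v,
          n * ∑ X ∈ RegDigraph n d, adjR X u' v' * (adjR X u v' * adjR X u' v * F X) := by
        simp only [← mul_sum, sum_comm (t := RegDigraph n d), sum_mul, mul_assoc]
    _ ≤ ∑ u' ∈ univ.erase u, ∑ v' ∈ univ.erase v,
          4 * d * ∑ X ∈ RegDigraph n d, adjR X u v' * adjR X u' v * (c * F X) :=
        sum_le_sum fun u' hu' => sum_le_sum fun v' hv' =>
          hF.sum_middle_edge_le hc hd hnd (ne_of_mem_erase hu').symm (ne_of_mem_erase hv').symm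
    _ ≤ ∑ u', ∑ v', 4 * d * ∑ X ∈ RegDigraph n d, adjR X u v' * adjR X u' v * (c * F X) := by
        have h₀ : ∀ u' v', 0 ≤ 4 * (d : ℝ) *
            ∑ X ∈ RegDigraph n d, adjR X u v' * adjR X u' v * (c * F X) := fun u' v' => by
          have := fun X => mul_nonneg (mul_nonneg (adjR_nonneg X u v') (adjR_nonneg X u' v))
            (mul_nonneg hc (hF.nonneg X))
          have := sum_nonneg fun X (_ : X ∈ RegDigraph n d) => this X
          positivity
        exact (sum_le_sum fun u' _ => sum_le_univ_sum_of_nonneg (h₀ u')).trans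
          (sum_le_univ_sum_of_nonneg fun u' => sum_nonneg fun v' _ => h₀ u' v')
    _ = 4 * d ^ 3 * c * ∑ X ∈ RegDigraph n d, F X := by
        simp only [← mul_sum, sum_comm (t := RegDigraph n d), ← sum_mul]
        rw [sum_congr rfl fun X hX => by rw [sum_adjR_row hX, sum_adjR_col hX]]
        simp only [← mul_sum]
        ring

lemma SwitchGrowth.sum_threeWalk_mul_le (hF : SwitchGrowth c F) (hc : 0 ≤ c) (hd : 0 < d)
    (hnd : 8 * d ≤ 3 * n) (u v : Fin n) :
    n * ∑ X ∈ RegDigraph n d, (adjR X * (adjR X)ᵀ * adjR X) u v * F X ≤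
      12 * d ^ 3 * c * ∑ X ∈ RegDigraph n d, F X := by
  have hd1 : (1 : ℝ) ≤ d := by exact_mod_cast hd
  have hF₀ : 0 ≤ c * ∑ X ∈ RegDigraph n d, F X :=
    mul_nonneg hc (sum_nonneg fun X _ => hF.nonneg X)
  calc n * ∑ X ∈ RegDigraph n d, (adjR X * (adjR X)ᵀ * adjR X) u v * F X
      ≤ n * ∑ X ∈ RegDigraph n d, ((∑ u' ∈ univ.erase u, ∑ v' ∈ univ.erase v,
          adjR X u' v' * (adjR X u v' * adjR X u' v)) * F X + 2 * d * (adjR X u v * F X)) := by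
        gcongr with X hX
        nlinarith [mul_le_mul_of_nonneg_right (adjR_threeWalk_le hX u v) (hF.nonneg X)]
    _ ≤ 4 * d ^ 3 * c * (∑ X ∈ RegDigraph n d, F X)
          + 2 * d * (4 * d * c * ∑ X ∈ RegDigraph n d, F X) := by
        rw [sum_add_distrib, ← mul_sum, mul_add, mul_left_comm (n : ℝ)]
        exact add_le_add (hF.sum_erase_threeWalk_mul_le hc hd hnd u v)
          (mul_le_mul_of_nonneg_left (hF.sum_adjR_mul_le hc hd hnd u v) (by positivity))
    _ ≤ _ := by
        have hd23 : (d : ℝ) ^ 2 ≤ d ^ 3 := pow_le_pow_right₀ hd1 (by norm_num)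
        linarith [mul_le_mul_of_nonneg_right hd23 hF₀]

end SwitchGrowth

/-! ### Concentration of linear statistics with bounded weights -/

section LinearStatistics

open Finset Matrix Real

variable {n d : ℕ} {X : Fin n → Fin n → Bool}

lemma sum_switchInd_sub (hX : X ∈ RegDigraph n d) (u v : Fin n) :
    ∑ u', ∑ v', switchInd X u v u' v' - ∑ u', ∑ v', switchInd X u v' u' v =
      (n * d - d ^ 2) * adjR X u v - d ^ 2 + (adjR X * (adjR X)ᵀ * adjR X) u v := by
  have hentry : ∀ u' v', switchInd X u v u' v' - switchInd X u v' u' v =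
      adjR X u v * (adjR X u' v' - adjR X u' v' * adjR X u v' - adjR X u' v' * adjR X u' v
        + adjR X u v' * adjR X u' v) - adjR X u v' * adjR X u' v
        + adjR X u v' * adjR X u' v' * adjR X u' v := fun u' v' => by
    simp only [switchInd_eq]
    ring
  simp only [← sum_sub_distrib, hentry]
  simp only [sum_add_distrib, sum_sub_distrib, ← mul_sum (a := adjR X u v), sum_adjR hX,
    sum_adjR_mul_row hX, sum_adjR_mul_col hX, sum_adjR_col_mul_row hX, adjR_threeWalk_apply]
  ring

/-- A Stein-type exchange identity: the left-hand side is the drift of the edge `(u, v)` under a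
random switching. -/
lemma sum_drift_mul (u v : Fin n) (F : (Fin n → Fin n → Bool) → ℝ) :
    ∑ X ∈ RegDigraph n d,
        ((n * d - d ^ 2) * adjR X u v - d ^ 2 + (adjR X * (adjR X)ᵀ * adjR X) u v) * F X =
      ∑ X ∈ RegDigraph n d,
        ∑ u', ∑ v', switchInd X u v' u' v * (F (switch X u v' u' v) - F X) := by
  simp only [mul_sub, sum_sub_distrib]
  rw [← sum_sum_switchInd_mul u v F, ← sum_sub_distrib]
  refine sum_congr rfl fun X hX => ?_
  rw [← sum_switchInd_sub hX, sub_mul]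
  simp only [sum_mul]

lemma sum_frobInner_drift_mul (Q : Matrix (Fin n) (Fin n) ℝ) (F : (Fin n → Fin n → Bool) → ℝ) :
    ∑ X ∈ RegDigraph n d, ((n * d - d ^ 2) * frobInner Q (adjR X) - d ^ 2 * (∑ u, ∑ v, Q u v)
        + frobInner Q (adjR X * (adjR X)ᵀ * adjR X)) * F X =
      ∑ X ∈ RegDigraph n d, ∑ u, ∑ v, ∑ u', ∑ v',
        Q u v * (switchInd X u v' u' v * (F (switch X u v' u' v) - F X)) := by
  have hdrift : ∀ X : Fin n → Fin n → Bool,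
      ((n * d - d ^ 2) * frobInner Q (adjR X) - d ^ 2 * (∑ u, ∑ v, Q u v)
        + frobInner Q (adjR X * (adjR X)ᵀ * adjR X)) * F X =
      ∑ u, ∑ v, Q u v * (((n * d - d ^ 2) * adjR X u v - d ^ 2
        + (adjR X * (adjR X)ᵀ * adjR X) u v) * F X) := fun X => by
    simp only [frobInner, mul_sum, ← sum_add_distrib, ← sum_sub_distrib, sum_mul]
    exact sum_congr rfl fun u _ => sum_congr rfl fun v _ => by ring
  simp only [hdrift, sum_comm (s := RegDigraph n d), ← mul_sum]
  simp only [sum_drift_mul, sum_comm (s := RegDigraph n d)]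

lemma mul_exp_sub_one_le {t x y z w : ℝ} (ht : 0 ≤ t) (h : |t * (x + w - y - z)| ≤ 1) :
    x * (exp (t * (x + w - y - z)) - 1) ≤ t * (5 * x ^ 2 + w ^ 2 + y ^ 2 + z ^ 2) :=
  calc x * (exp (t * (x + w - y - z)) - 1)
      ≤ |x| * |exp (t * (x + w - y - z)) - 1| := (le_abs_self _).trans_eq (abs_mul _ _)
    _ ≤ |x| * (2 * |t * (x + w - y - z)|) := by gcongr; exact abs_exp_sub_one_le h
    _ = t * (2 * (|x| * |x + w - y - z|)) := by rw [abs_mul, abs_of_nonneg ht]; ring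
    _ ≤ t * (5 * x ^ 2 + w ^ 2 + y ^ 2 + z ^ 2) := by
        gcongr
        have hD : |x + w - y - z| ≤ |x| + |w| + |y| + |z| := by
          rw [abs_le]
          constructor <;> linarith [neg_abs_le x, neg_abs_le y, neg_abs_le z, neg_abs_le w,
            le_abs_self x, le_abs_self y, le_abs_self z, le_abs_self w]
        nlinarith [mul_le_mul_of_nonneg_left hD (abs_nonneg x), sq_nonneg (|x| - |w|),
          sq_nonneg (|x| - |y|), sq_nonneg (|x| - |z|), sq_abs x, sq_abs y, sq_abs z, sq_abs w]

lemma mul_switchInd_mul_exp_sub_le {Q : Matrix (Fin n) (Fin n) ℝ} {a t : ℝ}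
    (hQ : ∀ u v, |Q u v| ≤ a) (ht : 0 ≤ t) (hat : 4 * a * t ≤ 1) (X : Fin n → Fin n → Bool)
    (u v u' v' : Fin n) :
    Q u v * (switchInd X u v' u' v * (exp (t * frobInner Q (adjR (switch X u v' u' v)))
        - exp (t * frobInner Q (adjR X)))) ≤
      adjR X u v' * adjR X u' v * (5 * Q u v ^ 2 + Q u' v' ^ 2 + Q u v' ^ 2 + Q u' v ^ 2)
        * (t * exp (t * frobInner Q (adjR X))) := by
  by_cases h : Switchable X u v' u' v
  · have habs : |t * (Q u v + Q u' v' - Q u v' - Q u' v)| ≤ 1 := by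
      rw [abs_le]
      constructor <;> nlinarith [abs_le.1 (hQ u v), abs_le.1 (hQ u' v), abs_le.1 (hQ u v'),
        abs_le.1 (hQ u' v')]
    have hstep := mul_le_mul_of_nonneg_right (mul_exp_sub_one_le ht habs)
      (exp_pos (t * frobInner Q (adjR X))).le
    rw [switchInd, if_pos h, adjR_apply, adjR_apply, if_pos h.1, if_pos h.2.1,
      frobInner_adjR_switch Q h, mul_add, exp_add]
    linarith
  · rw [switchInd, if_neg h, zero_mul, mul_zero]
    have := adjR_nonneg X u v'
    have := adjR_nonneg X u' v
    positivity

lemma sum_adjR_mul_adjR_mul (hX : X ∈ RegDigraph n d) (P : Matrix (Fin n) (Fin n) ℝ) :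
    ∑ u, ∑ v, ∑ u', ∑ v', adjR X u v' * adjR X u' v *
        (5 * P u v + P u' v' + P u v' + P u' v) =
      6 * d ^ 2 * (∑ u, ∑ v, P u v) + 2 * (n * d) * frobInner P (adjR X) := by
  have hopposite : ∑ u, ∑ v, ∑ u', ∑ v', P u' v' * (adjR X u v' * adjR X u' v) =
      d ^ 2 * ∑ u, ∑ v, P u v := by
    rw [sum_congr rfl fun u _ => sum_comm, sum_comm]
    rw [sum_congr rfl fun u' _ => sum_congr rfl fun u _ => sum_comm, sum_congr rfl
      fun u' _ => sum_comm]
    simp only [← mul_sum, ← sum_mul, sum_adjR_row hX, sum_adjR_col hX]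
    ring
  have hrow : ∑ u, ∑ v, ∑ u', ∑ v', P u v' * adjR X u v' * adjR X u' v =
      n * d * frobInner P (adjR X) := by
    simp only [← mul_sum, ← sum_mul, sum_adjR_col hX, frobInner]
    simp only [sum_const, card_univ, Fintype.card_fin, nsmul_eq_mul, mul_sum, sum_mul]
    exact sum_congr rfl fun u _ => sum_congr rfl fun v _ => by ring
  have hcol : ∑ u : Fin n, ∑ v, ∑ u', ∑ v', P u' v * adjR X u' v * adjR X u v' =
      n * d * frobInner P (adjR X) := by
    simp only [← mul_sum, ← sum_mul, sum_adjR_row hX, frobInner]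
    simp only [sum_const, card_univ, Fintype.card_fin, nsmul_eq_mul]
    rw [sum_comm]
    ring
  have hsame : ∑ u, ∑ v, ∑ u', ∑ v', P u v * (adjR X u v' * adjR X u' v) =
      d ^ 2 * ∑ u, ∑ v, P u v := by
    simp only [← mul_sum, ← sum_mul, sum_adjR_row hX, sum_adjR_col hX]
    ring
  have hentry : ∀ u v u' v', adjR X u v' * adjR X u' v * (5 * P u v + P u' v' + P u v' + P u' v) =
      5 * (P u v * (adjR X u v' * adjR X u' v)) + P u' v' * (adjR X u v' * adjR X u' v)
        + P u v' * adjR X u v' * adjR X u' v + P u' v * adjR X u' v * adjR X u v' :=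
    fun u v u' v' => by ring
  simp only [hentry, sum_add_distrib, ← mul_sum (a := (5 : ℝ)), hsame, hopposite, hrow, hcol]
  ring

lemma SwitchGrowth.mono {c c' : ℝ} {F : (Fin n → Fin n → Bool) → ℝ} (hF : SwitchGrowth c F)
    (hcc' : c ≤ c') : SwitchGrowth c' F where
  nonneg := hF.nonneg
  switch_le X u v u' v' h :=
    (hF.switch_le X u v u' v' h).trans (mul_le_mul_of_nonneg_right hcc' (hF.nonneg X))

lemma switchGrowth_three_exp_frobInner {Q : Matrix (Fin n) (Fin n) ℝ} {a t : ℝ}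
    (hQ : ∀ u v, |Q u v| ≤ a) (ht : 0 ≤ t) (hat : 4 * a * t ≤ 1) :
    SwitchGrowth 3 fun X => exp (t * frobInner Q (adjR X)) := by
  refine (SwitchGrowth.exp_frobInner (b := 4 * a) ht fun u v u' v' => ?_).mono ?_
  · linarith [abs_le.1 (hQ u v), abs_le.1 (hQ u' v), abs_le.1 (hQ u v'), abs_le.1 (hQ u' v')]
  · calc exp (t * (4 * a)) ≤ exp 1 := exp_le_exp.2 (by linarith)
      _ ≤ 3 := by linarith [exp_one_lt_d9]

lemma neg_frobInner_le_frobInner_abs (Q : Matrix (Fin n) (Fin n) ℝ)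
    {A : Matrix (Fin n) (Fin n) ℝ} (hA : ∀ u v, 0 ≤ A u v) :
    -frobInner Q A ≤ frobInner (Q.map abs) A := by
  simp only [frobInner, ← sum_neg_distrib, ← neg_mul, map_apply]
  exact sum_le_sum fun u _ => sum_le_sum fun v _ =>
    mul_le_mul_of_nonneg_right (neg_le_abs _) (hA u v)

lemma sum_frobInner_drift_mul_exp_le {Q : Matrix (Fin n) (Fin n) ℝ} {a t : ℝ}
    (hQ : ∀ u v, |Q u v| ≤ a) (ht : 0 ≤ t) (hat : 4 * a * t ≤ 1) :
    ∑ X ∈ RegDigraph n d, ((n * d - d ^ 2) * frobInner Q (adjR X) - d ^ 2 * (∑ u, ∑ v, Q u v)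
        + frobInner Q (adjR X * (adjR X)ᵀ * adjR X)) * exp (t * frobInner Q (adjR X)) ≤
      6 * t * d ^ 2 * (∑ u, ∑ v, Q u v ^ 2) * ∑ X ∈ RegDigraph n d, exp (t * frobInner Q (adjR X))
        + 2 * (n * d) * t * ∑ X ∈ RegDigraph n d,
            frobInner (Q.map (· ^ 2)) (adjR X) * exp (t * frobInner Q (adjR X)) := by
  rw [sum_frobInner_drift_mul Q fun X => exp (t * frobInner Q (adjR X))]
  simp only [mul_sum (s := RegDigraph n d), ← sum_add_distrib]
  refine sum_le_sum fun X hX => ?_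
  have hsum := congrArg (· * (t * exp (t * frobInner Q (adjR X))))
    (sum_adjR_mul_adjR_mul hX (Q.map (· ^ 2)))
  simp only [map_apply, sum_mul (s := univ)] at hsum
  refine le_trans ?_ (hsum.trans (by ring)).le
  exact sum_le_sum fun u _ => sum_le_sum fun v _ => sum_le_sum fun u' _ => sum_le_sum
    fun v' _ => mul_switchInd_mul_exp_sub_le hQ ht hat X u v u' v'

lemma SwitchGrowth.sum_neg_frobInner_threeWalk_mul_le {c : ℝ} {F : (Fin n → Fin n → Bool) → ℝ}
    (hF : SwitchGrowth c F) (hc : 0 ≤ c) (hn : 0 < n) (hd : 0 < d) (hnd : 8 * d ≤ 3 * n)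
    (Q : Matrix (Fin n) (Fin n) ℝ) :
    ∑ X ∈ RegDigraph n d, -frobInner Q (adjR X * (adjR X)ᵀ * adjR X) * F X ≤
      (∑ u, ∑ v, |Q u v|) * (12 * d ^ 3 * c / n * ∑ X ∈ RegDigraph n d, F X) := by
  have hwalk : ∀ (X : Fin n → Fin n → Bool) u v, 0 ≤ (adjR X * (adjR X)ᵀ * adjR X) u v :=
    fun X u v => by
      rw [adjR_threeWalk_apply]
      exact sum_nonneg fun _ _ => sum_nonneg fun _ _ => mul_nonneg
        (mul_nonneg (adjR_nonneg _ _ _) (adjR_nonneg _ _ _)) (adjR_nonneg _ _ _)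
  calc ∑ X ∈ RegDigraph n d, -frobInner Q (adjR X * (adjR X)ᵀ * adjR X) * F X
      ≤ ∑ X ∈ RegDigraph n d, frobInner (Q.map abs) (adjR X * (adjR X)ᵀ * adjR X) * F X :=
        sum_le_sum fun X _ => mul_le_mul_of_nonneg_right
          (neg_frobInner_le_frobInner_abs Q (hwalk X)) (hF.nonneg X)
    _ ≤ _ := sum_frobInner_mul_le_of_nonneg (R := Q.map abs) (fun _ _ => abs_nonneg _) _ F
        fun u v => by
          rw [div_mul_eq_mul_div, le_div_iff₀ (Nat.cast_pos.2 hn)]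
          linarith [hF.sum_threeWalk_mul_le hc hd hnd u v]

/-- The sum on the left is the derivative in `t` of the exponential moment on the right, so this is
a differential inequality for that moment. -/
lemma sum_frobInner_mul_exp_le (hn : 0 < n) (hd : 0 < d) (hnd : 8 * d ≤ 3 * n)
    {Q : Matrix (Fin n) (Fin n) ℝ} {a t : ℝ} (hQ : ∀ u v, |Q u v| ≤ a) (ht : 0 ≤ t)
    (hat : 4 * a * t ≤ 1) :
    (n * d - d ^ 2) * ∑ X ∈ RegDigraph n d,
        frobInner Q (adjR X) * exp (t * frobInner Q (adjR X)) ≤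
      (d ^ 2 * (∑ u, ∑ v, Q u v) + 36 * d ^ 3 / n * (∑ u, ∑ v, |Q u v|)
        + 30 * t * d ^ 2 * (∑ u, ∑ v, Q u v ^ 2)) *
        ∑ X ∈ RegDigraph n d, exp (t * frobInner Q (adjR X)) := by
  have hF := switchGrowth_three_exp_frobInner hQ ht hat
  have hdrift := sum_frobInner_drift_mul_exp_le (n := n) (d := d) hQ ht hat
  have hwalk := hF.sum_neg_frobInner_threeWalk_mul_le (by norm_num) hn hd hnd Q
  have hsq := mul_le_mul_of_nonneg_left (hF.sum_frobInner_mul_le (R := Q.map (· ^ 2))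
    (by norm_num) hn hd hnd fun _ _ => sq_nonneg _) (a := 2 * (n * d) * t) (by positivity)
  simp only [map_apply] at hsq
  have hexpand : ∑ X ∈ RegDigraph n d, ((n * d - d ^ 2) * frobInner Q (adjR X)
        - d ^ 2 * (∑ u, ∑ v, Q u v) + frobInner Q (adjR X * (adjR X)ᵀ * adjR X))
          * exp (t * frobInner Q (adjR X)) =
      (n * d - d ^ 2) * ∑ X ∈ RegDigraph n d,
          frobInner Q (adjR X) * exp (t * frobInner Q (adjR X))
        - d ^ 2 * (∑ u, ∑ v, Q u v) * ∑ X ∈ RegDigraph n d, exp (t * frobInner Q (adjR X))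
        - ∑ X ∈ RegDigraph n d, -frobInner Q (adjR X * (adjR X)ᵀ * adjR X)
            * exp (t * frobInner Q (adjR X)) := by
    simp only [mul_sum (s := RegDigraph n d), ← sum_sub_distrib]
    exact sum_congr rfl fun X _ => by ring
  have hdiv : (n : ℝ) * (d / n) = d := mul_div_cancel₀ _ (Nat.cast_pos.2 hn).ne'
  rw [hexpand] at hdrift
  linear_combination hdrift + hwalk + hsq + 24 * t * d * (∑ u, ∑ v, Q u v ^ 2)
    * (∑ X ∈ RegDigraph n d, exp (t * frobInner Q (adjR X))) * hdiv

lemma eight_mul_le_three_mul (hd : 0 < d) (h : 8 * d ^ 3 ≤ n ^ 2) : 8 * d ≤ 3 * n := by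
  by_contra! hlt
  have hsq : 9 * n ^ 2 ≤ 64 * d ^ 2 := by nlinarith
  have hpow : d ^ 2 ≤ d ^ 3 := pow_le_pow_right₀ hd (by norm_num)
  have hpos : 0 < d ^ 2 := by positivity
  omega

lemma sqrt_mul_self_le (h : 8 * d ^ 3 ≤ n ^ 2) : √d * d ≤ n := by
  have h' : (8 : ℝ) * d ^ 3 ≤ n ^ 2 := by exact_mod_cast h
  have hd := Nat.cast_nonneg (α := ℝ) d
  refine abs_le_of_sq_le_sq' ?_ (Nat.cast_nonneg n) |>.2
  rw [mul_pow, sq_sqrt hd]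
  linarith [pow_nonneg hd 3]

lemma drift_le {n s S A q t : ℝ} (hn : 0 < n) (hs : 0 < s) (hsn : s ^ 3 ≤ n)
    (hsn' : 8 * s ^ 2 ≤ 3 * n) (hSA : S ≤ A) (hA : A ≤ n) (hq : q ≤ 1) (ht : 0 ≤ t)
    (hts : t * s ≤ n / 4) :
    (s ^ 2) ^ 2 * S + 36 * (s ^ 2) ^ 3 / n * A + 30 * t * (s ^ 2) ^ 2 * q ≤
      (n * s ^ 2 - (s ^ 2) ^ 2) * (s ^ 2 / n * S + 72 * s) := by
  have hmean : (n * s ^ 2 - (s ^ 2) ^ 2) * (s ^ 2 / n * S) =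
      (s ^ 2) ^ 2 * S - (s ^ 2) ^ 3 / n * S := by field_simp
  have hlinear : (s ^ 2) ^ 3 / n * S + 36 * (s ^ 2) ^ 3 / n * A ≤ 37 * n * s ^ 3 :=
    calc (s ^ 2) ^ 3 / n * S + 36 * (s ^ 2) ^ 3 / n * A
        ≤ (s ^ 2) ^ 3 / n * n + 36 * (s ^ 2) ^ 3 / n * n := by
          gcongr
          exact hSA.trans hA
      _ = 37 * s ^ 3 * s ^ 3 := by field_simp; ring
      _ ≤ 37 * n * s ^ 3 := by gcongr
  have hquadratic : 30 * t * (s ^ 2) ^ 2 * q ≤ 8 * n * s ^ 3 :=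
    calc 30 * t * (s ^ 2) ^ 2 * q ≤ 30 * t * (s ^ 2) ^ 2 * 1 := by gcongr
      _ = 30 * (t * s) * s ^ 3 := by ring
      _ ≤ 32 * (n / 4) * s ^ 3 := by gcongr; norm_num
      _ = 8 * n * s ^ 3 := by ring
  nlinarith [pow_pos hs 3]

lemma card_filter_le_frobInner (hd : 0 < d) (h : 8 * d ^ 3 ≤ n ^ 2)
    {Q : Matrix (Fin n) (Fin n) ℝ} (hQ : ∀ u v, |Q u v| ≤ √d / n)
    (hQabs : ∑ u, ∑ v, |Q u v| ≤ n) (hQsq : ∑ u, ∑ v, Q u v ^ 2 ≤ 1) (b : ℝ) :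
    (#{X ∈ RegDigraph n d | d / n * (∑ u, ∑ v, Q u v) + b * √d ≤ frobInner Q (adjR X)} : ℝ) ≤
      exp ((18 - b / 4) * n) * #(RegDigraph n d) := by
  have hnd := eight_mul_le_three_mul hd h
  have hn : 0 < n := by omega
  have hn' : (0 : ℝ) < n := Nat.cast_pos.2 hn
  have hd' : (0 : ℝ) < d := Nat.cast_pos.2 hd
  have hs : 0 < √(d : ℝ) := sqrt_pos.2 hd'
  have hds : √(d : ℝ) ^ 2 = d := sq_sqrt hd'.le
  have hnd' : (8 : ℝ) * d ≤ 3 * n := by exact_mod_cast hnd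
  refine (card_filter_le_exp _ _ (B := d / n * (∑ u, ∑ v, Q u v) + 72 * √d)
    (t₀ := n / (4 * √d)) _ (by positivity) fun t ht => ?_).trans_eq ?_
  · have hts : t * √d ≤ n / 4 := by
      have := (le_div_iff₀ (by positivity)).1 ht.2.le
      linarith
    have hat : 4 * (√d / n) * t ≤ 1 := by
      rw [mul_div_assoc', div_mul_eq_mul_div, div_le_one hn']
      linarith
    have hdrift := drift_le hn' hs (by rw [pow_succ, hds, mul_comm]; exact sqrt_mul_self_le h)
      (by rwa [hds]) (sum_le_sum fun u _ => sum_le_sum fun v _ => le_abs_self (Q u v)) hQabs hQsq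
      ht.1 hts
    rw [hds] at hdrift
    refine le_of_mul_le_mul_left ((sum_frobInner_mul_exp_le hn hd hnd hQ ht.1 hat).trans ?_)
      (show (0 : ℝ) < n * d - d ^ 2 by nlinarith)
    rw [← mul_assoc]
    exact mul_le_mul_of_nonneg_right hdrift (sum_nonneg fun _ _ => (exp_pos _).le)
  · congr 2
    field_simp
    ring

lemma sq_sum_abs_le {ι : Type*} [Fintype ι] {x : ι → ℝ} (hx : ∑ u, x u ^ 2 ≤ 1) :
    (∑ u, |x u|) ^ 2 ≤ Fintype.card ι := by
  have := sq_sum_le_card_mul_sum_sq (s := univ) (f := fun u => |x u|)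
  simp only [sq_abs, card_univ] at this
  exact this.trans (mul_le_of_le_one_right (Nat.cast_nonneg _) hx)

/-- The restriction of the rank-one matrix `x yᵀ` to its entries of absolute value at most `τ`
(the light pairs). -/
def lightPart {m n : Type*} (τ : ℝ) (x : m → ℝ) (y : n → ℝ) : Matrix m n ℝ :=
  Matrix.of fun u v => if |x u * y v| ≤ τ then x u * y v else 0

lemma abs_lightPart_le {ι κ : Type*} {τ : ℝ} (hτ : 0 ≤ τ) (x : ι → ℝ) (y : κ → ℝ) (u : ι)
    (v : κ) : |lightPart τ x y u v| ≤ τ := by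
  rw [lightPart, of_apply]
  split_ifs with h
  · exact h
  · rwa [abs_zero]

lemma abs_lightPart_le_abs_mul {ι κ : Type*} (τ : ℝ) (x : ι → ℝ) (y : κ → ℝ) (u : ι) (v : κ) :
    |lightPart τ x y u v| ≤ |x u * y v| := by
  rw [lightPart, of_apply]
  split_ifs
  · rfl
  · rw [abs_zero]
    positivity

lemma sum_abs_lightPart_le {x y : Fin n → ℝ} (hx : ∑ u, x u ^ 2 ≤ 1) (hy : ∑ u, y u ^ 2 ≤ 1)
    (τ : ℝ) : ∑ u, ∑ v, |lightPart τ x y u v| ≤ n :=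
  calc ∑ u, ∑ v, |lightPart τ x y u v| ≤ ∑ u, ∑ v, |x u * y v| :=
        sum_le_sum fun u _ => sum_le_sum fun v _ => abs_lightPart_le_abs_mul τ x y u v
    _ = (∑ u, |x u|) * ∑ v, |y v| := by simp only [abs_mul, sum_mul_sum]
    _ ≤ n := by
        have hx' := sq_sum_abs_le hx
        have hy' := sq_sum_abs_le hy
        rw [Fintype.card_fin] at hx' hy'
        linarith [two_mul_le_add_sq (∑ u, |x u|) (∑ v, |y v|)]

lemma sum_lightPart_sq_le {ι κ : Type*} [Fintype ι] [Fintype κ] {x : ι → ℝ} {y : κ → ℝ}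
    (hx : ∑ u, x u ^ 2 ≤ 1) (hy : ∑ u, y u ^ 2 ≤ 1) (τ : ℝ) :
    ∑ u, ∑ v, lightPart τ x y u v ^ 2 ≤ 1 :=
  calc ∑ u, ∑ v, lightPart τ x y u v ^ 2 ≤ ∑ u, ∑ v, (x u * y v) ^ 2 :=
        sum_le_sum fun u _ => sum_le_sum fun v _ =>
          sq_le_sq.2 (abs_lightPart_le_abs_mul τ x y u v)
    _ = (∑ u, x u ^ 2) * ∑ v, y v ^ 2 := by simp only [mul_pow, sum_mul_sum]
    _ ≤ 1 := mul_le_one₀ hx (sum_nonneg fun _ _ => sq_nonneg _) hy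

end LinearStatistics

/-! ### Discrepancy -/

section Discrepancy

open Finset Matrix Real

variable {n d : ℕ}

lemma card_filter_le_frobInner_of_mul_lt (hn : 0 < n) (hd : 0 < d) (hnd : 8 * d ≤ 3 * n)
    {Q : Matrix (Fin n) (Fin n) ℝ} (hQ₀ : ∀ u v, 0 ≤ Q u v) (hQ₁ : ∀ u v, Q u v ≤ 1) {r : ℝ}
    (hμ : 0 < d / n * ∑ u, ∑ v, Q u v) (hr : 64 * (d / n * ∑ u, ∑ v, Q u v) < r) :
    (#{X ∈ RegDigraph n d | r ≤ frobInner Q (adjR X)} : ℝ) ≤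
      exp (-(r * log (r / (d / n * ∑ u, ∑ v, Q u v)) / 8)) * #(RegDigraph n d) := by
  set μ : ℝ := d / n * ∑ u, ∑ v, Q u v
  have hr₀ : 0 < r := by linarith
  have hr8 : 0 < r / (8 * μ) := by positivity
  have hlog8 : 2 * log 8 ≤ log (r / μ) := by
    rw [← Nat.cast_two, ← log_pow]
    exact log_le_log (by norm_num) (by rw [le_div_iff₀ hμ]; linarith)
  have hlog : log (r / (8 * μ)) = log (r / μ) - log 8 := by
    rw [← log_div (by positivity) (by norm_num), div_div, mul_comm μ]
  have hlog_nonneg : 0 ≤ log 8 := log_nonneg (by norm_num)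
  refine (card_filter_le_exp _ _ (B := r / 2) (t₀ := log (r / (8 * μ)) / 2) r
    (by linarith) fun t ht => ?_).trans ?_
  · have hgrowth := SwitchGrowth.exp_frobInner (Q := Q) (b := 2) ht.1 fun u v u' v' => by
      linarith [hQ₀ u v, hQ₀ u' v', hQ₁ u v', hQ₁ u' v]
    refine (hgrowth.sum_frobInner_mul_le (exp_pos _).le hn hd hnd hQ₀).trans ?_
    have hexp : exp (t * 2) ≤ r / (8 * μ) := by
      rw [← le_log_iff_exp_le hr8]
      linarith [ht.2]
    calc (∑ u, ∑ v, Q u v) * (4 * exp (t * 2) * (d / n) *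
          ∑ X ∈ RegDigraph n d, exp (t * frobInner Q (adjR X)))
        = 4 * μ * exp (t * 2) * ∑ X ∈ RegDigraph n d, exp (t * frobInner Q (adjR X)) := by ring
      _ ≤ 4 * μ * (r / (8 * μ)) * ∑ X ∈ RegDigraph n d, exp (t * frobInner Q (adjR X)) := by
          gcongr
      _ = r / 2 * ∑ X ∈ RegDigraph n d, exp (t * frobInner Q (adjR X)) := by
          field_simp; ring
  · gcongr
    rw [hlog]
    nlinarith

/-- All bad digraphs exceed the smallest bad value of the statistic, so a single tail bound
suffices. -/
lemma card_filter_mul_log_frobInner_le (hn : 0 < n) (hd : 0 < d) (hnd : 8 * d ≤ 3 * n)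
    {Q : Matrix (Fin n) (Fin n) ℝ} (hQ₀ : ∀ u v, 0 ≤ Q u v) (hQ₁ : ∀ u v, Q u v ≤ 1) {μ : ℝ}
    (hμ : 0 < μ) (hQμ : d / n * ∑ u, ∑ v, Q u v = μ) (B : ℝ) :
    (#{X ∈ RegDigraph n d | 64 * μ < frobInner Q (adjR X) ∧
        B < frobInner Q (adjR X) * log (frobInner Q (adjR X) / μ)} : ℝ) ≤
      exp (-(B / 8)) * #(RegDigraph n d) := by
  set bad := {X ∈ RegDigraph n d | 64 * μ < frobInner Q (adjR X) ∧
    B < frobInner Q (adjR X) * log (frobInner Q (adjR X) / μ)} with hbad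
  obtain hempty | hne := bad.eq_empty_or_nonempty
  · rw [hempty, card_empty, Nat.cast_zero]
    positivity
  obtain ⟨X₀, hX₀, hmin⟩ := exists_min_image bad (fun X => frobInner Q (adjR X)) hne
  obtain ⟨-, hμX₀, hBX₀⟩ := mem_filter.1 hX₀
  calc (#bad : ℝ)
      ≤ #{X ∈ RegDigraph n d | frobInner Q (adjR X₀) ≤ frobInner Q (adjR X)} := by
        gcongr
        exact fun X hX => mem_filter.2 ⟨(mem_filter.1 hX).1, hmin X hX⟩
    _ ≤ exp (-(frobInner Q (adjR X₀) * log (frobInner Q (adjR X₀) / μ) / 8)) *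
          #(RegDigraph n d) := by
        subst hQμ
        exact card_filter_le_frobInner_of_mul_lt hn hd hnd hQ₀ hQ₁ hμ hμX₀
    _ ≤ exp (-(B / 8)) * #(RegDigraph n d) := by gcongr

/-- The total weight `A` puts on `S × T`; for an adjacency matrix this is the number of edges from
`S` to `T`. -/
def edgeCount {m n : Type*} (A : Matrix m n ℝ) (S : Finset m) (T : Finset n) : ℝ :=
  ∑ u ∈ S, ∑ v ∈ T, A u v

lemma edgeCount_eq_frobInner {m n : Type*} [Fintype m] [Fintype n] (A : Matrix m n ℝ)
    (S : Finset m) (T : Finset n) :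
    edgeCount A S T = frobInner (Matrix.of fun u v => if u ∈ S ∧ v ∈ T then 1 else 0) A := by
  simp [edgeCount, frobInner, ite_and, sum_ite_mem]

lemma edgeCount_transpose {m n : Type*} (A : Matrix m n ℝ) (S : Finset m) (T : Finset n) :
    edgeCount A.transpose T S = edgeCount A S T := sum_comm

/-- An upper bound `s log (e n / s)` for `log (n.choose s)`. -/
def logChooseBound (n s : ℝ) : ℝ := s * (1 + log (n / s))

lemma logChooseBound_mono {n s t : ℝ} (hs : 0 < s) (hst : s ≤ t) (htn : t ≤ n) :
    logChooseBound n s ≤ logChooseBound n t := by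
  have ht : 0 < t := hs.trans_le hst
  have hn : 0 < n := ht.trans_le htn
  have hlog : s * (log t - log s) ≤ t - s :=
    calc s * (log t - log s) = s * log (t / s) := by rw [log_div ht.ne' hs.ne']
      _ ≤ s * (t / s - 1) := by gcongr; exact log_le_sub_one_of_pos (by positivity)
      _ = t - s := by field_simp
  rw [logChooseBound, logChooseBound, log_div hn.ne' hs.ne', log_div hn.ne' ht.ne']
  nlinarith [log_le_log ht htn]

lemma log_le_logChooseBound {n s : ℝ} (hs : 1 ≤ s) (hsn : s ≤ n) : log n ≤ logChooseBound n s := by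
  refine le_trans ?_ (logChooseBound_mono one_pos hs hsn)
  rw [logChooseBound, div_one]
  linarith

lemma choose_le_exp_logChooseBound {n s : ℕ} (hs : 0 < s) (hsn : s ≤ n) :
    (n.choose s : ℝ) ≤ exp (logChooseBound n s) := by
  have hn : 0 < n := hs.trans_le hsn
  calc (n.choose s : ℝ) ≤ (n : ℝ) ^ s / s.factorial := Nat.choose_le_pow_div s n
    _ = (s : ℝ) ^ s / s.factorial * (n / s : ℝ) ^ s := by rw [div_pow]; field_simp
    _ ≤ exp s * (n / s : ℝ) ^ s := by
        gcongr
        exact pow_div_factorial_le_exp _ (Nat.cast_nonneg s) s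
    _ = exp (logChooseBound n s) := by
        rw [logChooseBound, mul_add, mul_one, exp_add, ← log_pow, exp_log (by positivity)]

lemma sum_exp_neg_logChooseBound_le {ι : Type*} [Fintype ι] [Nonempty ι] {c : ℝ} (hc : 1 ≤ c) :
    ∑ S : Finset ι with S.Nonempty, exp (-(c * logChooseBound (Fintype.card ι) #S)) ≤
      (Fintype.card ι : ℝ) ^ (2 - c) := by
  set N := Fintype.card ι
  have hN : (0 : ℝ) < N := Nat.cast_pos.2 Fintype.card_pos
  have hterm : ∀ s ∈ Icc 1 N,
      (N.choose s : ℝ) * exp (-(c * logChooseBound N s)) ≤ (N : ℝ) ^ (1 - c) := by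
    intro s hs
    obtain ⟨hs, hsN⟩ := mem_Icc.1 hs
    calc (N.choose s : ℝ) * exp (-(c * logChooseBound N s))
        ≤ exp (logChooseBound N s) * exp (-(c * logChooseBound N s)) := by
          gcongr; exact choose_le_exp_logChooseBound hs hsN
      _ = exp (-(c - 1) * logChooseBound N s) := by rw [← exp_add]; ring_nf
      _ ≤ exp (log N * (1 - c)) := by
          have hlog : log N ≤ logChooseBound N s :=
            log_le_logChooseBound (by exact_mod_cast hs) (by exact_mod_cast hsN)
          exact exp_le_exp.2 (by nlinarith)
      _ = (N : ℝ) ^ (1 - c) := by rw [rpow_def_of_pos hN]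
  calc ∑ S : Finset ι with S.Nonempty, exp (-(c * logChooseBound N #S))
      = ∑ s ∈ Icc 1 N, ∑ S : Finset ι with S.Nonempty ∧ #S = s,
          exp (-(c * logChooseBound N #S)) := by
        simp only [← filter_filter]
        exact (sum_fiberwise_of_maps_to (fun S hS => mem_Icc.2
          ⟨(mem_filter.1 hS).2.card_pos, card_le_univ S⟩) _).symm
    _ ≤ ∑ s ∈ Icc 1 N, (N.choose s : ℝ) * exp (-(c * logChooseBound N s)) := by
        refine sum_le_sum fun s _ => ?_
        have : #{S : Finset ι | S.Nonempty ∧ #S = s} ≤ N.choose s :=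
          (card_le_card fun S hS => mem_powersetCard_univ.2 (mem_filter.1 hS).2.2).trans_eq
            (card_powersetCard s univ)
        rw [sum_congr rfl fun S hS => by rw [(mem_filter.1 hS).2.2], sum_const, nsmul_eq_mul]
        gcongr
    _ ≤ ∑ _s ∈ Icc 1 N, (N : ℝ) ^ (1 - c) := sum_le_sum hterm
    _ = (N : ℝ) ^ (2 - c) := by
        rw [sum_const, Nat.card_Icc, Nat.add_sub_cancel, nsmul_eq_mul,
          show (2 - c : ℝ) = 1 + (1 - c) by ring, rpow_add hN, rpow_one]

/-- No edge count exceeds its mean, at edge density `p`, by more than the union bound over pairs of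
vertex sets forces it to. -/
def HasDiscrepancy {ι : Type*} [Fintype ι] (κ p : ℝ) (A : Matrix ι ι ℝ) : Prop :=
  ∀ S T : Finset ι, S.Nonempty → T.Nonempty →
    edgeCount A S T ≤ 64 * (p * (#S * #T)) ∨
      edgeCount A S T * log (edgeCount A S T / (p * (#S * #T))) ≤
        κ * logChooseBound (Fintype.card ι) (max #S #T : ℕ)

lemma card_filter_le_sum_of_exists {α β : Type*} {s : Finset α} {t : Finset β} {Q : α → Prop}
    {P : β → α → Prop} [DecidablePred Q] [∀ i, DecidablePred (P i)]
    (h : ∀ x ∈ s, Q x → ∃ i ∈ t, P i x) :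
    #{x ∈ s | Q x} ≤ ∑ i ∈ t, #{x ∈ s | P i x} := by
  refine (card_le_card fun x hx => ?_).trans card_biUnion_le
  obtain ⟨hxs, hQ⟩ := mem_filter.1 hx
  obtain ⟨i, hi, hP⟩ := h x hxs hQ
  exact mem_biUnion.2 ⟨i, hi, mem_filter.2 ⟨hxs, hP⟩⟩

lemma card_filter_edgeCount_le (hn : 0 < n) (hd : 0 < d) (hnd : 8 * d ≤ 3 * n)
    {S T : Finset (Fin n)} (hS : S.Nonempty) (hT : T.Nonempty) {κ : ℝ} (hκ : 0 ≤ κ) :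
    (#{X ∈ RegDigraph n d | 64 * (d / n * (#S * #T)) < edgeCount (adjR X) S T ∧
        κ * logChooseBound n (max #S #T : ℕ) <
          edgeCount (adjR X) S T * log (edgeCount (adjR X) S T / (d / n * (#S * #T)))} : ℝ) ≤
      exp (-(κ / 16 * logChooseBound n #S)) * exp (-(κ / 16 * logChooseBound n #T)) *
        #(RegDigraph n d) := by
  have : (0 : ℝ) < n := Nat.cast_pos.2 hn
  have : (0 : ℝ) < d := Nat.cast_pos.2 hd
  have hS' : (0 : ℝ) < #S := Nat.cast_pos.2 hS.card_pos
  have hT' : (0 : ℝ) < #T := Nat.cast_pos.2 hT.card_pos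
  have hmax : ((max #S #T : ℕ) : ℝ) ≤ n := by
    exact_mod_cast max_le (card_finset_fin_le S) (card_finset_fin_le T)
  have hLS := logChooseBound_mono hS' (Nat.cast_le.2 (le_max_left #S #T)) hmax
  have hLT := logChooseBound_mono hT' (Nat.cast_le.2 (le_max_right #S #T)) hmax
  simp only [edgeCount_eq_frobInner]
  refine (card_filter_mul_log_frobInner_le hn hd hnd ?_ ?_ (by positivity) ?_ _).trans ?_
  · intro u v
    simp only [of_apply]
    split_ifs <;> norm_num
  · intro u v
    simp only [of_apply]
    split_ifs <;> norm_num
  · congr 1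
    simp [ite_and]
  · rw [← exp_add]
    gcongr
    nlinarith

lemma card_filter_not_hasDiscrepancy_le (hn : 0 < n) (hd : 0 < d) (hnd : 8 * d ≤ 3 * n) {K : ℝ}
    (hK : 0 ≤ K) :
    (#{X ∈ RegDigraph n d | ¬ HasDiscrepancy (8 * (K + 4)) (d / n) (adjR X)} : ℝ) ≤
      (n : ℝ) ^ (-K) * #(RegDigraph n d) := by
  have : Nonempty (Fin n) := Fin.pos_iff_nonempty.1 hn
  set κ := 8 * (K + 4) with hκ
  set N : Finset (Finset (Fin n)) := {S | S.Nonempty}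
  set w : Finset (Fin n) → ℝ := fun S => exp (-(κ / 16 * logChooseBound n #S))
  have hw : ∑ S ∈ N, w S ≤ (n : ℝ) ^ (-(K / 2)) := by
    have h := sum_exp_neg_logChooseBound_le (ι := Fin n) (c := κ / 16) (by linarith)
    rwa [Fintype.card_fin, show 2 - κ / 16 = -(K / 2) by rw [hκ]; ring] at h
  have hunion : #{X ∈ RegDigraph n d | ¬ HasDiscrepancy κ (d / n) (adjR X)} ≤
      ∑ P ∈ N ×ˢ N, #{X ∈ RegDigraph n d |
        64 * (d / n * (#P.1 * #P.2)) < edgeCount (adjR X) P.1 P.2 ∧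
          κ * logChooseBound n (max #P.1 #P.2 : ℕ) < edgeCount (adjR X) P.1 P.2 *
            log (edgeCount (adjR X) P.1 P.2 / (d / n * (#P.1 * #P.2)))} := by
    refine card_filter_le_sum_of_exists fun X _ hX => ?_
    unfold HasDiscrepancy at hX
    push Not at hX
    obtain ⟨S, T, hS, hT, hST⟩ := hX
    rw [Fintype.card_fin] at hST
    exact ⟨(S, T), mem_product.2 ⟨mem_filter.2 ⟨mem_univ S, hS⟩, mem_filter.2 ⟨mem_univ T, hT⟩⟩,
      hST⟩
  refine (Nat.cast_le.2 hunion).trans ?_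
  rw [Nat.cast_sum]
  calc _ ≤ ∑ P ∈ N ×ˢ N, w P.1 * w P.2 * #(RegDigraph n d) :=
        sum_le_sum fun P hP => card_filter_edgeCount_le hn hd hnd
          (mem_filter.1 (mem_product.1 hP).1).2 (mem_filter.1 (mem_product.1 hP).2).2
          (by positivity)
    _ = (∑ S ∈ N, w S) * (∑ T ∈ N, w T) * #(RegDigraph n d) := by
        rw [← sum_mul, sum_mul_sum, sum_product]
    _ ≤ (n : ℝ) ^ (-(K / 2)) * (n : ℝ) ^ (-(K / 2)) * #(RegDigraph n d) := by
        have : 0 ≤ ∑ S ∈ N, w S := sum_nonneg fun _ _ => (exp_pos _).le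
        gcongr
    _ = (n : ℝ) ^ (-K) * #(RegDigraph n d) := by
        rw [← rpow_add (Nat.cast_pos.2 hn), ← neg_add, add_halves]

end Discrepancy

/-! ### Heavy pairs -/

section DyadicSums

open Finset Real

lemma sum_two_zpow_le (F : Finset ℤ) {R : ℝ} (hR : 0 ≤ R) (hF : ∀ i ∈ F, (2 : ℝ) ^ i ≤ R) :
    ∑ i ∈ F, (2 : ℝ) ^ i ≤ 2 * R := by
  induction F using Finset.induction_on_max generalizing R with
  | empty => simpa using hR
  | insert a F hlt ih =>
    have hprev : ∑ i ∈ F, (2 : ℝ) ^ i ≤ 2 * 2 ^ (a - 1) := ih (by positivity) fun i hi =>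
      zpow_le_zpow_right₀ one_le_two (Int.le_sub_one_of_lt (hlt i hi))
    rw [sum_insert fun ha => (hlt a ha).false]
    calc (2 : ℝ) ^ a + ∑ i ∈ F, (2 : ℝ) ^ i ≤ 2 ^ a + 2 * 2 ^ (a - 1) := by gcongr
      _ = 2 * 2 ^ a := by rw [mul_comm 2 ((2 : ℝ) ^ (a - 1)), ← zpow_add_one₀ two_ne_zero]; ring_nf
      _ ≤ 2 * R := by gcongr; exact hF a (mem_insert_self a F)

lemma sum_inv_two_zpow_le (F : Finset ℤ) {R : ℝ} (hR : 0 < R) (hF : ∀ i ∈ F, R ≤ (2 : ℝ) ^ i) :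
    ∑ i ∈ F, ((2 : ℝ) ^ i)⁻¹ ≤ 2 * R⁻¹ := by
  have h := sum_two_zpow_le (F.image Neg.neg) (inv_nonneg.2 hR.le) <| by
    simpa only [forall_mem_image, zpow_neg] using fun i hi => inv_anti₀ hR (hF i hi)
  simpa only [sum_image neg_injective.injOn, zpow_neg] using h

end DyadicSums

section PairBound

open Finset Real

variable {κ D n s t A B e : ℝ}

/-- The part of `pairBound` handling the case in which the discrepancy bound is governed by the
set of size `t`. -/
def sideBound (κ D s t A B : ℝ) : ℝ :=
  4 * κ * (if A ≤ D * B then B * t * A else 0) + 4 * κ * (if A ≤ D then A * B ^ 2 * t else 0) +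
    3 * (if D ≤ 4 * (A * B) then A * s * D ^ 2 * B⁻¹ else 0)

/-- The contribution of a pair of level sets to the sum over heavy pairs: the sets have sizes `s`
and `t` out of `n`, the vectors have magnitudes about `A` and `B` on them, and `e` edges of a
`D ^ 2`-regular digraph run between them. -/
def pairBound (κ D n s t A B e : ℝ) : ℝ :=
  256 * D / n * (A ^ 2 * s) * (B ^ 2 * t) + A ^ 2 / D * e + B ^ 2 / D * e +
    sideBound κ D s t A B + sideBound κ D t s B A

lemma sideBound_nonneg (hκ : 0 ≤ κ) (hs : 0 ≤ s) (ht : 0 ≤ t) (hA : 0 ≤ A) (hB : 0 ≤ B) :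
    0 ≤ sideBound κ D s t A B := by
  unfold sideBound
  positivity

lemma pairBound_nonneg (hκ : 0 ≤ κ) (hD : 0 ≤ D) (hn : 0 ≤ n) (hs : 0 ≤ s) (ht : 0 ≤ t)
    (hA : 0 ≤ A) (hB : 0 ≤ B) (he : 0 ≤ e) : 0 ≤ pairBound κ D n s t A B e := by
  have h₁ := sideBound_nonneg (D := D) hκ hs ht hA hB
  have h₂ := sideBound_nonneg (D := D) hκ ht hs hB hA
  unfold pairBound
  positivity

lemma one_le_one_add_log_div (ht : 0 < t) (htn : t ≤ n) : 1 ≤ 1 + log (n / t) :=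
  le_add_of_nonneg_right (log_nonneg ((one_le_div ht).2 htn))

lemma le_four_mul_of_log_div_le {r : ℝ} (ht : 0 < t) (htn : t ≤ n) (he : 0 ≤ e)
    (h : e * log r ≤ κ * logChooseBound n t) (hr : 1 + log (n / t) ≤ 4 * log r) :
    e ≤ 4 * (κ * t) := by
  have hL := one_le_one_add_log_div ht htn
  refine le_of_mul_le_mul_right ?_ (by linarith : 0 < 1 + log (n / t))
  calc e * (1 + log (n / t)) ≤ e * (4 * log r) := by gcongr
    _ = 4 * (e * log r) := by ring
    _ ≤ 4 * (κ * logChooseBound n t) := by gcongr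
    _ = 4 * (κ * t) * (1 + log (n / t)) := by rw [logChooseBound]; ring

lemma le_four_mul_mul_of_log_div_le {r : ℝ} (hκ : 0 ≤ κ) (ht : 0 ≤ t) (hB : 0 < B) (he : 0 ≤ e)
    (hr : 1 ≤ log r) (h : e * log r ≤ κ * logChooseBound n t)
    (hlogB : 1 + log (n / t) ≤ 4 * log B) :
    e ≤ 4 * (κ * t * B) := by
  have hB' : log B ≤ B := (log_le_sub_one_of_pos hB).trans (by linarith)
  calc e ≤ e * log r := le_mul_of_one_le_right he hr
    _ ≤ κ * (t * (1 + log (n / t))) := h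
    _ ≤ κ * (t * (4 * B)) := by gcongr; linarith
    _ = 4 * (κ * t * B) := by ring

lemma sq_mul_mul_le_of_lt_log_div {r : ℝ} (ht : 0 < t) (htn : t ≤ n) (hB : 0 < B) (hr : 0 < r)
    (hlogr : 4 * log r ≤ 1 + log (n / t)) (hlogB : 4 * log B ≤ 1 + log (n / t)) :
    B ^ 2 * r * t ≤ 3 * n := by
  have hn : 0 < n := ht.trans_le htn
  have hlog : log (n / t) = log n - log t := log_div hn.ne' ht.ne'
  have hL := one_le_one_add_log_div ht htn
  calc B ^ 2 * r * t = exp (2 * log B + log r + log t) := by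
        rw [exp_add, exp_add, exp_log hr, exp_log ht, two_mul, exp_add, exp_log hB, sq]
    _ ≤ exp (1 + log n) := exp_le_exp.2 (by linarith)
    _ = exp 1 * n := by rw [exp_add, exp_log hn]
    _ ≤ 3 * n := by gcongr; linarith [exp_one_lt_d9]

lemma mul_le_sideBound (hκ : 0 ≤ κ) (hD : 0 < D) (hs : 0 < s) (ht : 0 < t) (htn : t ≤ n)
    (hA : 0 < A) (hB : 0 < B) (he : 64 * (D ^ 2 / n * (s * t)) < e)
    (hdisc : e * log (e / (D ^ 2 / n * (s * t))) ≤ κ * logChooseBound n t)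
    (hheavy : D ≤ 4 * (A * B)) (hlarge : 256 * (A * B) < e / (D ^ 2 / n * (s * t)) * D)
    (hAB : A ≤ D * B) : A * B * e ≤ sideBound κ D s t A B := by
  have hn : 0 < n := ht.trans_le htn
  have hμ : 0 < D ^ 2 / n * (s * t) := by positivity
  have he₀ : 0 < e := by linarith
  set r := e / (D ^ 2 / n * (s * t)) with hr
  have hr₀ : 64 < r := (lt_div_iff₀ hμ).2 he
  have hlogr : 1 ≤ log r := by
    rw [le_log_iff_exp_le (by linarith)]
    linarith [exp_one_lt_d9]
  have h₁ : 0 ≤ 4 * κ * (if A ≤ D * B then B * t * A else 0) := by positivity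
  have h₂ : 0 ≤ 4 * κ * (if A ≤ D then A * B ^ 2 * t else 0) := by positivity
  have h₃ : 0 ≤ 3 * (if D ≤ 4 * (A * B) then A * s * D ^ 2 * B⁻¹ else 0) := by positivity
  unfold sideBound
  obtain hLr | hLr := le_total (1 + log (n / t)) (4 * log r)
  · rw [if_pos hAB] at h₁ ⊢
    have := mul_le_mul_of_nonneg_left (le_four_mul_of_log_div_le ht htn he₀.le hdisc hLr)
      (by positivity : 0 ≤ A * B)
    linarith
  obtain hLB | hLB := le_total (1 + log (n / t)) (4 * log B)
  · have hrB : r ≤ B := (log_le_log_iff (by linarith) hB).1 (by linarith)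
    have hAD : A ≤ D := by
      have : A * B ≤ D * B := by nlinarith
      exact le_of_mul_le_mul_right this hB
    rw [if_pos hAD] at h₂ ⊢
    have := mul_le_mul_of_nonneg_left
      (le_four_mul_mul_of_log_div_le hκ ht.le hB he₀.le hlogr hdisc hLB)
      (by positivity : 0 ≤ A * B)
    linarith
  · rw [if_pos hheavy] at h₃ ⊢
    have hkey := sq_mul_mul_le_of_lt_log_div ht htn hB (by linarith) hLr hLB
    have : A * B * e ≤ 3 * (A * s * D ^ 2 * B⁻¹) :=
      calc A * B * e = A * s * D ^ 2 * B⁻¹ / n * (B ^ 2 * r * t) := by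
            rw [hr]; field_simp
        _ ≤ A * s * D ^ 2 * B⁻¹ / n * (3 * n) := by gcongr
        _ = 3 * (A * s * D ^ 2 * B⁻¹) := by field_simp
    linarith

lemma mul_le_pairBound (hκ : 0 ≤ κ) (hD : 0 < D) (hs : 0 < s) (ht : 0 < t) (hsn : s ≤ n)
    (htn : t ≤ n) (hA : 0 < A) (hB : 0 < B) (he : 0 ≤ e) (hheavy : D ≤ 4 * (A * B))
    (hdisc : e ≤ 64 * (D ^ 2 / n * (s * t)) ∨
      e * log (e / (D ^ 2 / n * (s * t))) ≤ κ * logChooseBound n (max s t)) :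
    A * B * e ≤ pairBound κ D n s t A B e := by
  have hn : 0 < n := ht.trans_le htn
  have hμ : 0 < D ^ 2 / n * (s * t) := by positivity
  have h₁ : 0 ≤ 256 * D / n * (A ^ 2 * s) * (B ^ 2 * t) := by positivity
  have h₂ : 0 ≤ A ^ 2 / D * e := by positivity
  have h₃ : 0 ≤ B ^ 2 / D * e := by positivity
  have h₄ := sideBound_nonneg (D := D) hκ hs.le ht.le hA.le hB.le
  have h₅ := sideBound_nonneg (D := D) hκ ht.le hs.le hB.le hA.le
  unfold pairBound
  obtain hsmall | hlarge := le_or_gt (e * D) (256 * (A * B) * (D ^ 2 / n * (s * t)))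
  · have : A * B * e ≤ 256 * D / n * (A ^ 2 * s) * (B ^ 2 * t) :=
      calc A * B * e = A * B / D * (e * D) := by field_simp
        _ ≤ A * B / D * (256 * (A * B) * (D ^ 2 / n * (s * t))) := by gcongr
        _ = 256 * D / n * (A ^ 2 * s) * (B ^ 2 * t) := by field_simp
    linarith
  have he64 : 64 * (D ^ 2 / n * (s * t)) < e := by nlinarith
  replace hdisc := hdisc.resolve_left he64.not_ge
  replace hlarge : 256 * (A * B) < e / (D ^ 2 / n * (s * t)) * D := by
    rwa [div_mul_eq_mul_div, lt_div_iff₀ hμ]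
  obtain hAB | hAB := lt_or_ge (D * B) A
  · have : A * B * e ≤ A ^ 2 / D * e := by
      gcongr
      rw [le_div_iff₀ hD]; nlinarith
    linarith
  obtain hBA | hBA := lt_or_ge (D * A) B
  · have : A * B * e ≤ B ^ 2 / D * e := by
      gcongr
      rw [le_div_iff₀ hD]; nlinarith
    linarith
  obtain hst | hts := le_total s t
  · rw [max_eq_right hst] at hdisc
    linarith [mul_le_sideBound hκ hD hs ht htn hA hB he64 hdisc hheavy hlarge hAB]
  · rw [max_eq_left hts] at hdisc
    rw [mul_comm s t] at hdisc he64 hlarge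
    rw [mul_comm A B] at hlarge hheavy ⊢
    linarith [mul_le_sideBound hκ hD ht hs hsn hB hA he64 hdisc hheavy hlarge hBA]

end PairBound

section SumPairBound

open Finset Real

variable {κ D n : ℝ} (I J : Finset ℤ) {s t : ℤ → ℝ}

lemma sum_ite_le_mul_two_zpow_le (hD : 0 < D) (ht : ∀ j, 0 ≤ t j)
    (htJ : ∑ j ∈ J, ((2 : ℝ) ^ j) ^ 2 * t j ≤ n) :
    ∑ i ∈ I, ∑ j ∈ J, (if (2 : ℝ) ^ i ≤ D * 2 ^ j then 2 ^ j * t j * 2 ^ i else 0) ≤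
      2 * n * D := by
  rw [sum_comm]
  simp only [← sum_filter, ← mul_sum]
  calc ∑ j ∈ J, 2 ^ j * t j * ∑ i ∈ I with (2 : ℝ) ^ i ≤ D * 2 ^ j, (2 : ℝ) ^ i
      ≤ ∑ j ∈ J, 2 ^ j * t j * (2 * (D * 2 ^ j)) := by
        refine sum_le_sum fun j _ =>
          mul_le_mul_of_nonneg_left ?_ (mul_nonneg (by positivity) (ht j))
        exact sum_two_zpow_le _ (by positivity) fun i hi => (mem_filter.1 hi).2
    _ = 2 * D * ∑ j ∈ J, ((2 : ℝ) ^ j) ^ 2 * t j := by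
        rw [mul_sum]; exact sum_congr rfl fun j _ => by ring
    _ ≤ 2 * D * n := by gcongr
    _ = 2 * n * D := by ring

lemma sum_ite_two_zpow_le_le (hD : 0 < D) (ht : ∀ j, 0 ≤ t j)
    (htJ : ∑ j ∈ J, ((2 : ℝ) ^ j) ^ 2 * t j ≤ n) :
    ∑ i ∈ I, ∑ j ∈ J, (if (2 : ℝ) ^ i ≤ D then 2 ^ i * (2 ^ j) ^ 2 * t j else 0) ≤
      2 * n * D := by
  have hI : ∑ i ∈ I with (2 : ℝ) ^ i ≤ D, (2 : ℝ) ^ i ≤ 2 * D :=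
    sum_two_zpow_le _ hD.le fun i hi => (mem_filter.1 hi).2
  calc ∑ i ∈ I, ∑ j ∈ J, (if (2 : ℝ) ^ i ≤ D then 2 ^ i * (2 ^ j) ^ 2 * t j else 0)
      = (∑ i ∈ I with (2 : ℝ) ^ i ≤ D, (2 : ℝ) ^ i) * ∑ j ∈ J, ((2 : ℝ) ^ j) ^ 2 * t j := by
        rw [sum_mul_sum, sum_filter]
        refine sum_congr rfl fun i _ => ?_
        split_ifs
        · simp only [mul_assoc]
        · exact sum_const_zero
    _ ≤ 2 * D * n := by
        have : 0 ≤ ∑ j ∈ J, ((2 : ℝ) ^ j) ^ 2 * t j :=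
          sum_nonneg fun j _ => mul_nonneg (by positivity) (ht j)
        gcongr
    _ = 2 * n * D := by ring

lemma sum_ite_le_four_mul_le (hD : 0 < D) (hs : ∀ i, 0 ≤ s i)
    (hsI : ∑ i ∈ I, ((2 : ℝ) ^ i) ^ 2 * s i ≤ n) :
    ∑ i ∈ I, ∑ j ∈ J, (if D ≤ 4 * ((2 : ℝ) ^ i * 2 ^ j) then
      2 ^ i * s i * D ^ 2 * ((2 : ℝ) ^ j)⁻¹ else 0) ≤ 8 * n * D := by
  simp only [← sum_filter, ← mul_sum]
  calc ∑ i ∈ I, 2 ^ i * s i * D ^ 2 *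
        ∑ j ∈ J with D ≤ 4 * ((2 : ℝ) ^ i * 2 ^ j), ((2 : ℝ) ^ j)⁻¹
      ≤ ∑ i ∈ I, 2 ^ i * s i * D ^ 2 * (2 * (D / (4 * 2 ^ i))⁻¹) := by
        refine sum_le_sum fun i _ => mul_le_mul_of_nonneg_left ?_
          (mul_nonneg (mul_nonneg (by positivity) (hs i)) (sq_nonneg D))
        refine sum_inv_two_zpow_le _ (by positivity) fun j hj => ?_
        rw [div_le_iff₀ (by positivity)]
        linarith [(mem_filter.1 hj).2]
    _ = 8 * D * ∑ i ∈ I, ((2 : ℝ) ^ i) ^ 2 * s i := by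
        rw [mul_sum]
        refine sum_congr rfl fun i _ => ?_
        field_simp
        ring
    _ ≤ 8 * D * n := by gcongr
    _ = 8 * n * D := by ring

lemma sum_sideBound_le (hκ : 0 ≤ κ) (hD : 0 < D) (hs : ∀ i, 0 ≤ s i) (ht : ∀ j, 0 ≤ t j)
    (hsI : ∑ i ∈ I, ((2 : ℝ) ^ i) ^ 2 * s i ≤ n)
    (htJ : ∑ j ∈ J, ((2 : ℝ) ^ j) ^ 2 * t j ≤ n) :
    ∑ i ∈ I, ∑ j ∈ J, sideBound κ D (s i) (t j) (2 ^ i) (2 ^ j) ≤ (16 * κ + 24) * n * D := by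
  have h₁ := mul_le_mul_of_nonneg_left (sum_ite_le_mul_two_zpow_le I J hD ht htJ)
    (by positivity : 0 ≤ 4 * κ)
  have h₂ := mul_le_mul_of_nonneg_left (sum_ite_two_zpow_le_le I J hD ht htJ)
    (by positivity : 0 ≤ 4 * κ)
  have h₃ := sum_ite_le_four_mul_le I J hD hs hsI
  simp only [sideBound, sum_add_distrib, ← mul_sum]
  linarith

lemma sum_sq_div_mul_le {e : ℤ → ℤ → ℝ} (hD : 0 < D)
    (hsI : ∑ i ∈ I, ((2 : ℝ) ^ i) ^ 2 * s i ≤ n)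
    (he : ∀ i ∈ I, ∑ j ∈ J, e i j ≤ D ^ 2 * s i) :
    ∑ i ∈ I, ∑ j ∈ J, ((2 : ℝ) ^ i) ^ 2 / D * e i j ≤ n * D := by
  simp only [← mul_sum]
  calc ∑ i ∈ I, ((2 : ℝ) ^ i) ^ 2 / D * ∑ j ∈ J, e i j
      ≤ ∑ i ∈ I, ((2 : ℝ) ^ i) ^ 2 / D * (D ^ 2 * s i) :=
        sum_le_sum fun i hi => mul_le_mul_of_nonneg_left (he i hi) (by positivity)
    _ = D * ∑ i ∈ I, ((2 : ℝ) ^ i) ^ 2 * s i := by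
        rw [mul_sum]
        refine sum_congr rfl fun i _ => ?_
        field_simp
    _ ≤ D * n := by gcongr
    _ = n * D := by ring

lemma sum_pairBound_le {e : ℤ → ℤ → ℝ} (hκ : 0 ≤ κ) (hD : 0 < D) (hn : 0 < n)
    (hs : ∀ i, 0 ≤ s i) (ht : ∀ j, 0 ≤ t j)
    (hsI : ∑ i ∈ I, ((2 : ℝ) ^ i) ^ 2 * s i ≤ n)
    (htJ : ∑ j ∈ J, ((2 : ℝ) ^ j) ^ 2 * t j ≤ n)
    (heI : ∀ i ∈ I, ∑ j ∈ J, e i j ≤ D ^ 2 * s i)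
    (heJ : ∀ j ∈ J, ∑ i ∈ I, e i j ≤ D ^ 2 * t j) :
    ∑ i ∈ I, ∑ j ∈ J, pairBound κ D n (s i) (t j) (2 ^ i) (2 ^ j) (e i j) ≤
      (306 + 32 * κ) * n * D := by
  have hmean : ∑ i ∈ I, ∑ j ∈ J, 256 * D / n * (((2 : ℝ) ^ i) ^ 2 * s i) * ((2 ^ j) ^ 2 * t j) ≤
      256 * n * D := by
    have : 0 ≤ ∑ j ∈ J, ((2 : ℝ) ^ j) ^ 2 * t j :=
      sum_nonneg fun j _ => mul_nonneg (by positivity) (ht j)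
    simp only [← mul_sum, ← sum_mul]
    calc _ ≤ 256 * D / n * n * n := by gcongr
      _ = 256 * n * D := by field_simp
  have hrows := sum_sq_div_mul_le I J hD hsI heI
  have hcols := sum_sq_div_mul_le J I (e := fun j i => e i j) hD htJ heJ
  have hside := sum_sideBound_le I J hκ hD hs ht hsI htJ
  have hside' := sum_sideBound_le J I hκ hD ht hs htJ hsI
  rw [sum_comm] at hcols hside'
  simp only [pairBound, sum_add_distrib]
  linarith

end SumPairBound

section DyadicLevels

open Finset Real

variable {ι : Type*} [Fintype ι]

/-- The points at which the positive part of `p` has order of magnitude `2 ^ i`. -/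
def dyadicLevel (p : ι → ℝ) (i : ℤ) : Finset ι := {u | 0 < p u ∧ Int.log 2 (p u) = i}

/-- The indices of the nonempty dyadic level sets of `p`. -/
def dyadicLevels (p : ι → ℝ) : Finset ℤ :=
  ({u | 0 < p u} : Finset ι).image fun u => Int.log 2 (p u)

lemma two_zpow_le_of_mem_dyadicLevel {p : ι → ℝ} {i : ℤ} {u : ι} (hu : u ∈ dyadicLevel p i) :
    2 ^ i ≤ p u := by
  obtain ⟨hpu, rfl⟩ := (mem_filter.1 hu).2
  exact Int.zpow_log_le_self one_lt_two hpu

lemma le_two_mul_two_zpow_of_mem_dyadicLevel {p : ι → ℝ} {i : ℤ} {u : ι}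
    (hu : u ∈ dyadicLevel p i) : p u ≤ 2 * 2 ^ i := by
  obtain ⟨-, rfl⟩ := (mem_filter.1 hu).2
  rw [mul_comm, ← zpow_add_one₀ two_ne_zero]
  exact (Int.lt_zpow_succ_log_self one_lt_two (p u)).le

lemma dyadicLevel_nonempty {p : ι → ℝ} {i : ℤ} (hi : i ∈ dyadicLevels p) :
    (dyadicLevel p i).Nonempty := by
  obtain ⟨u, hu, rfl⟩ := mem_image.1 hi
  exact ⟨u, mem_filter.2 ⟨mem_univ u, (mem_filter.1 hu).2, rfl⟩⟩

lemma sum_dyadicLevels (p f : ι → ℝ) :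
    ∑ i ∈ dyadicLevels p, ∑ u ∈ dyadicLevel p i, f u = ∑ u with 0 < p u, f u := by
  simp only [dyadicLevel, ← filter_filter]
  exact sum_fiberwise_of_maps_to (fun u hu => mem_image_of_mem _ hu) f

lemma sum_dyadicLevels_le (p : ι → ℝ) {f : ι → ℝ} (hf : ∀ u, 0 ≤ f u) :
    ∑ i ∈ dyadicLevels p, ∑ u ∈ dyadicLevel p i, f u ≤ ∑ u, f u := by
  rw [sum_dyadicLevels]
  exact sum_le_sum_of_subset_of_nonneg (subset_univ _) fun u _ _ => hf u

lemma sum_dyadicLevels_eq {p f : ι → ℝ} (hf : ∀ u, p u ≤ 0 → f u = 0) :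
    ∑ i ∈ dyadicLevels p, ∑ u ∈ dyadicLevel p i, f u = ∑ u, f u := by
  rw [sum_dyadicLevels]
  exact sum_filter_of_ne fun u _ hu => not_le.1 fun hpu => hu (hf u hpu)

lemma sum_sq_mul_card_dyadicLevel_le (p : ι → ℝ) :
    ∑ i ∈ dyadicLevels p, ((2 : ℝ) ^ i) ^ 2 * #(dyadicLevel p i) ≤ ∑ u, p u ^ 2 := by
  refine le_trans (sum_le_sum fun i _ => ?_) (sum_dyadicLevels_le p fun u => sq_nonneg (p u))
  rw [mul_comm, ← nsmul_eq_mul]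
  refine card_nsmul_le_sum _ _ _ fun u hu => ?_
  gcongr
  exact two_zpow_le_of_mem_dyadicLevel hu

variable {A : Matrix ι ι ℝ} {κ d : ℝ}

lemma sum_edgeCount_dyadicLevel_right_le (hA : ∀ u v, 0 ≤ A u v) (hrow : ∀ u, ∑ v, A u v = d)
    (S : Finset ι) (q : ι → ℝ) :
    ∑ j ∈ dyadicLevels q, edgeCount A S (dyadicLevel q j) ≤ d * #S := by
  simp only [edgeCount]
  rw [sum_comm, mul_comm, ← nsmul_eq_mul]
  exact sum_le_card_nsmul _ _ _ fun u _ => (sum_dyadicLevels_le q (hA u)).trans_eq (hrow u)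

lemma sum_edgeCount_dyadicLevel_left_le (hA : ∀ u v, 0 ≤ A u v) (hcol : ∀ v, ∑ u, A u v = d)
    (p : ι → ℝ) (T : Finset ι) :
    ∑ i ∈ dyadicLevels p, edgeCount A (dyadicLevel p i) T ≤ d * #T := by
  simpa only [edgeCount_transpose] using
    sum_edgeCount_dyadicLevel_right_le (A := A.transpose) (fun v u => hA u v) hcol T p

lemma sum_heavy_edgeCount_dyadicLevel_le (hκ : 0 ≤ κ) (hd : 0 < d) (hι : 0 < Fintype.card ι)
    (hA : ∀ u v, 0 ≤ A u v) (hrow : ∀ u, ∑ v, A u v = d) (hcol : ∀ v, ∑ u, A u v = d)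
    (hdisc : HasDiscrepancy κ (d / Fintype.card ι) A) {p q : ι → ℝ}
    (hp : ∑ u, p u ^ 2 ≤ Fintype.card ι) (hq : ∑ v, q v ^ 2 ≤ Fintype.card ι) :
    ∑ i ∈ dyadicLevels p, ∑ j ∈ dyadicLevels q, (if √d ≤ 4 * ((2 : ℝ) ^ i * 2 ^ j) then
      2 ^ i * 2 ^ j * edgeCount A (dyadicLevel p i) (dyadicLevel q j) else 0) ≤
        (306 + 32 * κ) * Fintype.card ι * √d := by
  have hd₂ : √d ^ 2 = d := sq_sqrt hd.le
  have he (S T : Finset ι) : 0 ≤ edgeCount A S T :=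
    sum_nonneg fun u _ => sum_nonneg fun v _ => hA u v
  refine le_trans (sum_le_sum fun i hi => sum_le_sum fun j hj => ?_)
    (sum_pairBound_le (dyadicLevels p) (dyadicLevels q) (κ := κ) (D := √d) (n := Fintype.card ι)
      (s := fun i => #(dyadicLevel p i)) (t := fun j => #(dyadicLevel q j))
      (e := fun i j => edgeCount A (dyadicLevel p i) (dyadicLevel q j)) hκ (sqrt_pos.2 hd)
      (Nat.cast_pos.2 hι) (fun i => Nat.cast_nonneg _) (fun j => Nat.cast_nonneg _)
      ((sum_sq_mul_card_dyadicLevel_le p).trans hp) ((sum_sq_mul_card_dyadicLevel_le q).trans hq)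
      (fun i _ => ?_) (fun j _ => ?_))
  · split_ifs with hheavy
    · have hS := dyadicLevel_nonempty hi
      have hT := dyadicLevel_nonempty hj
      refine mul_le_pairBound hκ (sqrt_pos.2 hd) (Nat.cast_pos.2 hS.card_pos)
        (Nat.cast_pos.2 hT.card_pos) (Nat.cast_le.2 (card_le_univ _))
        (Nat.cast_le.2 (card_le_univ _)) (by positivity) (by positivity) (he _ _) hheavy ?_
      rw [hd₂, ← Nat.cast_max]
      exact hdisc _ _ hS hT
    · exact pairBound_nonneg hκ (sqrt_nonneg d) (Nat.cast_nonneg _) (Nat.cast_nonneg _)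
        (Nat.cast_nonneg _) (by positivity) (by positivity) (he _ _)
  · rw [hd₂]
    exact sum_edgeCount_dyadicLevel_right_le hA hrow _ q
  · rw [hd₂]
    exact sum_edgeCount_dyadicLevel_left_le hA hcol p _

lemma ite_lt_mul_le_of_mem_dyadicLevel {p q : ι → ℝ} {i j : ℤ} {u v : ι} {a D : ℝ}
    (hu : u ∈ dyadicLevel p i) (hv : v ∈ dyadicLevel q j) (ha : 0 ≤ a) :
    (if D < p u * q v then p u * q v * a else 0) ≤
      4 * (if D ≤ 4 * ((2 : ℝ) ^ i * 2 ^ j) then 2 ^ i * 2 ^ j * a else 0) := by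
  have hpq : p u * q v ≤ 4 * ((2 : ℝ) ^ i * 2 ^ j) :=
    calc p u * q v ≤ (2 * 2 ^ i) * (2 * 2 ^ j) := mul_le_mul
          (le_two_mul_two_zpow_of_mem_dyadicLevel hu) (le_two_mul_two_zpow_of_mem_dyadicLevel hv)
          (mem_filter.1 hv).2.1.le (by positivity)
      _ = 4 * ((2 : ℝ) ^ i * 2 ^ j) := by ring
  split_ifs with hD hD'
  · calc p u * q v * a ≤ 4 * ((2 : ℝ) ^ i * 2 ^ j) * a := by gcongr
      _ = 4 * ((2 : ℝ) ^ i * 2 ^ j * a) := by ring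
  · exact absurd (hD.le.trans hpq) hD'
  all_goals positivity

lemma sum_heavy_mul_le (hκ : 0 ≤ κ) (hd : 0 < d) (hι : 0 < Fintype.card ι)
    (hA : ∀ u v, 0 ≤ A u v) (hrow : ∀ u, ∑ v, A u v = d) (hcol : ∀ v, ∑ u, A u v = d)
    (hdisc : HasDiscrepancy κ (d / Fintype.card ι) A) {p q : ι → ℝ} (hp₀ : ∀ u, 0 ≤ p u)
    (hq₀ : ∀ v, 0 ≤ q v) (hp : ∑ u, p u ^ 2 ≤ Fintype.card ι)
    (hq : ∑ v, q v ^ 2 ≤ Fintype.card ι) :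
    ∑ u, ∑ v, (if √d < p u * q v then p u * q v * A u v else 0) ≤
      4 * (306 + 32 * κ) * Fintype.card ι * √d := by
  calc ∑ u, ∑ v, (if √d < p u * q v then p u * q v * A u v else 0)
      = ∑ i ∈ dyadicLevels p, ∑ j ∈ dyadicLevels q, ∑ u ∈ dyadicLevel p i,
          ∑ v ∈ dyadicLevel q j, (if √d < p u * q v then p u * q v * A u v else 0) := by
        rw [← sum_dyadicLevels_eq (p := p)]
        · refine sum_congr rfl fun i _ => Eq.trans (sum_congr rfl fun u _ => ?_) sum_comm
          refine (sum_dyadicLevels_eq fun v hv => ?_).symm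
          simp [hv.antisymm (hq₀ v)]
        · intro u hu
          simp [hu.antisymm (hp₀ u)]
    _ ≤ ∑ i ∈ dyadicLevels p, ∑ j ∈ dyadicLevels q, ∑ u ∈ dyadicLevel p i,
          ∑ v ∈ dyadicLevel q j,
            4 * (if √d ≤ 4 * ((2 : ℝ) ^ i * 2 ^ j) then 2 ^ i * 2 ^ j * A u v else 0) :=
        sum_le_sum fun i _ => sum_le_sum fun j _ => sum_le_sum fun u hu => sum_le_sum fun v hv =>
          ite_lt_mul_le_of_mem_dyadicLevel hu hv (hA u v)
    _ = 4 * ∑ i ∈ dyadicLevels p, ∑ j ∈ dyadicLevels q,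
          (if √d ≤ 4 * ((2 : ℝ) ^ i * 2 ^ j) then
            2 ^ i * 2 ^ j * edgeCount A (dyadicLevel p i) (dyadicLevel q j) else 0) := by
        simp only [mul_sum]
        refine sum_congr rfl fun i _ => sum_congr rfl fun j _ => ?_
        split_ifs
        · simp only [edgeCount, mul_sum]
        · simp only [mul_zero, sum_const_zero]
    _ ≤ 4 * ((306 + 32 * κ) * Fintype.card ι * √d) := by
        gcongr
        exact sum_heavy_edgeCount_dyadicLevel_le hκ hd hι hA hrow hcol hdisc hp hq
    _ = 4 * (306 + 32 * κ) * Fintype.card ι * √d := by ring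

lemma sum_heavy_abs_mul_le (hκ : 0 ≤ κ) (hd : 0 < d) (hι : 0 < Fintype.card ι)
    (hA : ∀ u v, 0 ≤ A u v) (hrow : ∀ u, ∑ v, A u v = d) (hcol : ∀ v, ∑ u, A u v = d)
    (hdisc : HasDiscrepancy κ (d / Fintype.card ι) A) {x y : ι → ℝ} (hx : ∑ u, x u ^ 2 ≤ 1)
    (hy : ∑ v, y v ^ 2 ≤ 1) :
    ∑ u, ∑ v, (if √d / Fintype.card ι < |x u * y v| then |x u * y v| * A u v else 0) ≤
      4 * (306 + 32 * κ) * √d := by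
  set N : ℝ := (Fintype.card ι : ℝ)
  have hN : 0 < N := Nat.cast_pos.2 hι
  have hscale {z : ι → ℝ} (hz : ∑ u, z u ^ 2 ≤ 1) : ∑ u, (|z u| * √N) ^ 2 ≤ N := by
    simp only [mul_pow, sq_abs, sq_sqrt hN.le, ← sum_mul]
    exact mul_le_of_le_one_left hN.le hz
  have hmul (u v : ι) : |x u| * √N * (|y v| * √N) = N * |x u * y v| := by
    rw [mul_mul_mul_comm, mul_self_sqrt hN.le, abs_mul, mul_comm]
  have h := sum_heavy_mul_le hκ hd hι hA hrow hcol hdisc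
    (fun u => mul_nonneg (abs_nonneg (x u)) (sqrt_nonneg N))
    (fun v => mul_nonneg (abs_nonneg (y v)) (sqrt_nonneg N)) (hscale hx) (hscale hy)
  refine le_of_mul_le_mul_left ?_ hN
  calc N * ∑ u, ∑ v, (if √d / N < |x u * y v| then |x u * y v| * A u v else 0)
      = ∑ u, ∑ v, (if √d < |x u| * √N * (|y v| * √N) then
          |x u| * √N * (|y v| * √N) * A u v else 0) := by
        simp only [hmul, mul_sum, mul_ite, mul_zero, div_lt_iff₀' hN, mul_assoc]
    _ ≤ 4 * (306 + 32 * κ) * N * √d := h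
    _ = N * (4 * (306 + 32 * κ) * √d) := by ring

end DyadicLevels

/-! ### Nets and the norm of the centered adjacency matrix -/

section Nets

open Metric Module
open scoped NNReal RealInnerProductSpace

variable {E F : Type*} [NormedAddCommGroup E] [NormedAddCommGroup F]

lemma exists_norm_sub_le_half_of_isCover {N : Set E}
    (hN : IsCover (1 / 2) (closedBall (0 : E) 1) N) {x : E} (hx : ‖x‖ ≤ 1) :
    ∃ y ∈ N, ‖x - y‖ ≤ 1 / 2 := by
  obtain ⟨y, hy, hxy⟩ := hN (mem_closedBall_zero_iff.2 hx)
  refine ⟨y, hy, ?_⟩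
  have h : edist x y ≤ (1 / 2 : ℝ≥0) := hxy
  rw [edist_nndist, ENNReal.coe_le_coe, ← NNReal.coe_le_coe, coe_nndist, dist_eq_norm] at h
  simpa using h

variable [NormedSpace ℝ E]

lemma packingNumber_half_closedBall_le [FiniteDimensional ℝ E] :
    packingNumber (1 / 2) (closedBall (0 : E) 1) ≤ (5 ^ finrank ℝ E : ℕ) := by
  refine iSup₂_le fun C hC => iSup_le fun hsep => ?_
  by_contra! hlt
  obtain ⟨T, hTC, hT⟩ := Set.exists_subset_encard_eq (Order.add_one_le_of_lt hlt)
  lift T to Finset E using Set.finite_of_encard_eq_coe (k := 5 ^ finrank ℝ E + 1) hT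
  have hinj : Function.Injective fun x : E => (2 : ℝ) • x := smul_right_injective E two_ne_zero
  have hcard : (T.image fun x => (2 : ℝ) • x).card ≤ 5 ^ finrank ℝ E := by
    refine Besicovitch.card_le_of_separated _ ?_ ?_
    · simp only [Finset.forall_mem_image]
      intro x hx
      have := mem_closedBall_zero_iff.1 (hC (hTC hx))
      rw [norm_smul, Real.norm_two]
      linarith
    · simp only [Finset.forall_mem_image]
      intro x hx y hy hxy
      have h : ((1 / 2 : ℝ≥0) : ENNReal) < edist x y :=
        hsep (hTC hx) (hTC hy) fun h => hxy (by rw [h])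
      rw [edist_nndist, ENNReal.coe_lt_coe, ← NNReal.coe_lt_coe, coe_nndist, dist_eq_norm] at h
      rw [← smul_sub, norm_smul, Real.norm_two]
      norm_num at h
      linarith
  rw [Finset.card_image_of_injective _ hinj] at hcard
  rw [Set.encard_coe_eq_coe_finsetCard] at hT
  norm_cast at hT
  omega

variable (E) in
lemma exists_finset_isCover_half [FiniteDimensional ℝ E] :
    ∃ N : Finset E, N.card ≤ 5 ^ finrank ℝ E ∧ (N : Set E) ⊆ closedBall 0 1 ∧
      IsCover (1 / 2) (closedBall (0 : E) 1) N := by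
  have hle := (coveringNumber_le_packingNumber (1 / 2) (closedBall (0 : E) 1)).trans
    packingNumber_half_closedBall_le
  obtain ⟨C, hC, hfin, hcover, hcard⟩ := exists_set_encard_eq_coveringNumber
    (ne_top_of_le_ne_top (ENat.natCast_ne_top _) hle)
  lift C to Finset E using hfin
  rw [← hcard, Set.encard_coe_eq_coe_finsetCard] at hle
  exact ⟨C, by exact_mod_cast hle, hC, hcover⟩

lemma opNorm_le_two_mul_of_isCover [NormedSpace ℝ F] {T : E →L[ℝ] F} {N : Set E} {c : ℝ}
    (hN : IsCover (1 / 2) (closedBall (0 : E) 1) N) (hT : ∀ y ∈ N, ‖T y‖ ≤ c) :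
    ‖T‖ ≤ 2 * c := by
  have h (x : E) (hx : ‖x‖ ≤ 1) : ‖T x‖ ≤ c + ‖T‖ * (1 / 2) := by
    obtain ⟨y, hy, hxy⟩ := exists_norm_sub_le_half_of_isCover hN hx
    calc ‖T x‖ = ‖T y + T (x - y)‖ := by rw [← map_add, add_sub_cancel]
      _ ≤ ‖T y‖ + ‖T (x - y)‖ := norm_add_le _ _
      _ ≤ c + ‖T‖ * (1 / 2) := add_le_add (hT y hy) (T.le_opNorm_of_le hxy)
  have hnonneg : 0 ≤ c + ‖T‖ * (1 / 2) := by simpa using h 0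
  linarith [T.opNorm_le_of_unit_norm hnonneg fun x hx => h x hx.le]

variable [InnerProductSpace ℝ F]

lemma norm_le_two_mul_of_isCover {v : F} {N : Set F} {c : ℝ}
    (hN : IsCover (1 / 2) (closedBall (0 : F) 1) N) (hv : ∀ x ∈ N, ⟪x, v⟫ ≤ c) :
    ‖v‖ ≤ 2 * c := by
  obtain ⟨y, hy, hvy⟩ := exists_norm_sub_le_half_of_isCover hN (x := ‖v‖⁻¹ • v) <| by
    rw [norm_smul, norm_inv, norm_norm]
    exact inv_mul_le_one
  have hnorm : ⟪‖v‖⁻¹ • v, v⟫ = ‖v‖ := by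
    rw [real_inner_smul_left, real_inner_self_eq_norm_mul_norm, ← mul_assoc,
      mul_comm, ← mul_assoc, mul_inv_mul_cancel]
  have hsub : ⟪‖v‖⁻¹ • v - y, v⟫ ≤ 1 / 2 * ‖v‖ :=
    (real_inner_le_norm _ _).trans (by gcongr)
  rw [inner_sub_left, hnorm] at hsub
  linarith [hv y hy]

lemma opNorm_le_four_mul_of_isCover {T : E →L[ℝ] F} {N : Set E} {P : Set F} {c : ℝ}
    (hN : IsCover (1 / 2) (closedBall (0 : E) 1) N)
    (hP : IsCover (1 / 2) (closedBall (0 : F) 1) P) (hT : ∀ x ∈ P, ∀ y ∈ N, ⟪x, T y⟫ ≤ c) :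
    ‖T‖ ≤ 4 * c := by
  have hnorm (y : E) (hy : y ∈ N) : ‖T y‖ ≤ 2 * c :=
    norm_le_two_mul_of_isCover hP fun x hx => hT x hx y hy
  linarith [opNorm_le_two_mul_of_isCover hN hnorm]

end Nets

section CenteredNorm

open Finset Matrix Metric Real
open scoped RealInnerProductSpace

variable {n d : ℕ}

/-- The light-pair event for the net `N` and the matrix `A`: for all `x, y ∈ N`, the light part of
the bilinear form of `A`, at threshold `√d / n`, exceeds that of the constant matrix `d / n` by
less than `b * √d`. -/
def HasLightBound (b d : ℝ) (N : Finset (EuclideanSpace ℝ (Fin n)))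
    (A : Matrix (Fin n) (Fin n) ℝ) : Prop :=
  ∀ x ∈ N, ∀ y ∈ N, frobInner (lightPart (√d / n) x y) A <
    d / n * (∑ u, ∑ v, lightPart (√d / n) x y u v) + b * √d

lemma sum_sq_le_one_of_mem_closedBall {ι : Type*} [Fintype ι] {x : EuclideanSpace ℝ ι}
    (hx : x ∈ closedBall 0 1) : ∑ u, x u ^ 2 ≤ 1 := by
  rw [← EuclideanSpace.real_norm_sq_eq]
  exact pow_le_one₀ (norm_nonneg x) (mem_closedBall_zero_iff.1 hx)

lemma five_pow_le_exp (n : ℕ) : (5 : ℝ) ^ n ≤ exp (2 * n) := by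
  have h : (5 : ℝ) ≤ exp 2 := by
    rw [← one_add_one_eq_two, exp_add]
    nlinarith [exp_one_gt_d9]
  rw [mul_comm, exp_nat_mul]
  gcongr

lemma card_filter_not_hasLightBound_le (hd : 0 < d) (h : 8 * d ^ 3 ≤ n ^ 2)
    {N : Finset (EuclideanSpace ℝ (Fin n))} (hN : (N : Set (EuclideanSpace ℝ (Fin n))) ⊆
      closedBall 0 1) (hcard : #N ≤ 5 ^ n) :
    (#{X ∈ RegDigraph n d | ¬HasLightBound 92 d N (adjR X)} : ℝ) ≤
      exp (-n) * #(RegDigraph n d) := by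
  have htail (p : EuclideanSpace ℝ (Fin n) × EuclideanSpace ℝ (Fin n)) (hp : p ∈ N ×ˢ N) :
      (#{X ∈ RegDigraph n d | d / n * (∑ u, ∑ v, lightPart (√d / n) p.1 p.2 u v) + 92 * √d ≤
        frobInner (lightPart (√d / n) p.1 p.2) (adjR X)} : ℝ) ≤
      exp ((18 - 92 / 4) * n) * #(RegDigraph n d) := by
    have hx := sum_sq_le_one_of_mem_closedBall (hN (mem_product.1 hp).1)
    have hy := sum_sq_le_one_of_mem_closedBall (hN (mem_product.1 hp).2)
    exact card_filter_le_frobInner hd h (abs_lightPart_le (by positivity) _ _)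
      (sum_abs_lightPart_le hx hy _) (sum_lightPart_sq_le hx hy _) 92
  have hunion := card_filter_le_sum_of_exists (s := RegDigraph n d) (t := N ×ˢ N)
    (Q := fun X => ¬HasLightBound 92 d N (adjR X))
    (P := fun p X => d / n * (∑ u, ∑ v, lightPart (√d / n) p.1 p.2 u v) + 92 * √d ≤
      frobInner (lightPart (√d / n) p.1 p.2) (adjR X)) <| by
    intro X _ hX
    simp only [HasLightBound, not_forall, not_lt] at hX
    obtain ⟨x, hx, y, hy, hxy⟩ := hX
    exact ⟨(x, y), mk_mem_product hx hy, hxy⟩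
  have hN' : (#N : ℝ) ≤ exp (2 * n) := by
    refine le_trans ?_ (five_pow_le_exp n)
    exact_mod_cast hcard
  calc (#{X ∈ RegDigraph n d | ¬HasLightBound 92 d N (adjR X)} : ℝ)
      ≤ ∑ _p ∈ N ×ˢ N, exp ((18 - 92 / 4) * n) * #(RegDigraph n d) := by
        refine le_trans ?_ (sum_le_sum htail)
        exact_mod_cast hunion
    _ = #N * #N * (exp ((18 - 92 / 4) * n) * #(RegDigraph n d)) := by
        rw [sum_const, card_product, nsmul_eq_mul, Nat.cast_mul]
    _ ≤ exp (2 * n) * exp (2 * n) * (exp ((18 - 92 / 4) * n) * #(RegDigraph n d)) := by gcongr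
    _ = exp (-n) * #(RegDigraph n d) := by
        rw [← mul_assoc, ← exp_add, ← exp_add]
        ring_nf

/-- The adjacency matrix of `X` minus the constant matrix `d / n`, its average over the rows. -/
def centeredAdj (d : ℕ) (X : Fin n → Fin n → Bool) : Matrix (Fin n) (Fin n) ℝ :=
  adjR X - of fun _ _ => (d : ℝ) / n

/-- Splitting `z` at the threshold `τ`: the subtracted term of a heavy pair, where `|z| > τ`, is
at most `s * z ^ 2 / τ`. -/
lemma mul_sub_le_of_threshold {z a s τ : ℝ} (ha : 0 ≤ a) (hs : 0 ≤ s) (hτ : 0 < τ) :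
    z * (a - s) ≤ (if |z| ≤ τ then z else 0) * (a - s) +
      (if τ < |z| then |z| * a else 0) + s / τ * z ^ 2 := by
  split_ifs with hle hlt hlt
  · exact absurd hlt hle.not_gt
  · have : 0 ≤ s / τ * z ^ 2 := by positivity
    linarith
  · have hneg : -z * s ≤ s / τ * z ^ 2 := by
      calc -z * s ≤ |z| * s := by gcongr; exact neg_le_abs z
        _ = s / τ * (τ * |z|) := by field_simp
        _ ≤ s / τ * (|z| * |z|) := by gcongr
        _ = s / τ * z ^ 2 := by rw [abs_mul_abs_self, sq]
    linarith [mul_le_mul_of_nonneg_right (le_abs_self z) ha]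
  · exact absurd (not_le.1 hle) hlt

lemma dotProduct_centeredAdj_mulVec_le {κ : ℝ} {X : Fin n → Fin n → Bool} (hn : 0 < n) (hd : 0 < d)
    (hX : X ∈ RegDigraph n d) (hκ : 0 ≤ κ) (hdisc : HasDiscrepancy κ (d / n) (adjR X))
    {N : Finset (EuclideanSpace ℝ (Fin n))} (hlight : HasLightBound 92 d N (adjR X))
    {x y : EuclideanSpace ℝ (Fin n)} (hxN : x ∈ N) (hyN : y ∈ N) (hx : ∑ u, x u ^ 2 ≤ 1)
    (hy : ∑ u, y u ^ 2 ≤ 1) :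
    x.ofLp ⬝ᵥ centeredAdj d X *ᵥ y.ofLp ≤ (93 + 4 * (306 + 32 * κ)) * √d := by
  have hheavy : ∑ u, ∑ v, (if √d / n < |x u * y v| then |x u * y v| * adjR X u v else 0) ≤
      4 * (306 + 32 * κ) * √d := by
    have := sum_heavy_abs_mul_le (A := adjR X) (d := d) hκ (by positivity)
      (by simpa using hn) (adjR_nonneg X) (sum_adjR_row hX) (sum_adjR_col hX)
      (by simpa using hdisc) hx hy
    simpa using this
  have hsq : ∑ u, ∑ v, √d * (x u * y v) ^ 2 ≤ √d := by
    simp only [mul_pow, ← mul_sum, ← sum_mul]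
    exact mul_le_of_le_one_right (sqrt_nonneg _)
      (mul_le_one₀ hx (sum_nonneg fun _ _ => sq_nonneg _) hy)
  have hratio : (d : ℝ) / n / (√d / n) = √d := by
    rw [div_div_div_cancel_right₀ (by positivity), div_sqrt]
  calc x.ofLp ⬝ᵥ centeredAdj d X *ᵥ y.ofLp
      = ∑ u, ∑ v, x u * y v * (adjR X u v - d / n) := by
        rw [← frobInner_vecMulVec]
        exact sum_congr rfl fun u _ => sum_congr rfl fun v _ => mul_comm _ _
    _ ≤ ∑ u, ∑ v, (lightPart (√d / n) x y u v * (adjR X u v - d / n) +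
          (if √d / n < |x u * y v| then |x u * y v| * adjR X u v else 0) +
          √d * (x u * y v) ^ 2) := by
        refine sum_le_sum fun u _ => sum_le_sum fun v _ => ?_
        have := mul_sub_le_of_threshold (z := x u * y v) (s := d / n) (τ := √d / n)
          (adjR_nonneg X u v) (by positivity) (by positivity)
        rwa [hratio] at this
    _ = (frobInner (lightPart (√d / n) x y) (adjR X) -
          d / n * ∑ u, ∑ v, lightPart (√d / n) x y u v) +
        ∑ u, ∑ v, (if √d / n < |x u * y v| then |x u * y v| * adjR X u v else 0) +
        ∑ u, ∑ v, √d * (x u * y v) ^ 2 := by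
        simp only [frobInner, sum_add_distrib, mul_sub, sum_sub_distrib, mul_comm (d / n : ℝ),
          sum_mul]
    _ ≤ (93 + 4 * (306 + 32 * κ)) * √d := by linarith [hlight x hxN y hyN]

lemma norm_toEuclideanCLM_centeredAdj_le {κ : ℝ} {X : Fin n → Fin n → Bool} (hn : 0 < n)
    (hd : 0 < d) (hX : X ∈ RegDigraph n d) (hκ : 0 ≤ κ)
    (hdisc : HasDiscrepancy κ (d / n) (adjR X)) {N : Finset (EuclideanSpace ℝ (Fin n))}
    (hN : (N : Set (EuclideanSpace ℝ (Fin n))) ⊆ closedBall 0 1)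
    (hcover : IsCover (1 / 2) (closedBall 0 1) (N : Set (EuclideanSpace ℝ (Fin n))))
    (hlight : HasLightBound 92 d N (adjR X)) :
    ‖toEuclideanCLM (𝕜 := ℝ) (centeredAdj d X)‖ ≤ 4 * (93 + 4 * (306 + 32 * κ)) * √d := by
  rw [mul_assoc]
  refine opNorm_le_four_mul_of_isCover hcover hcover fun x hx y hy => ?_
  rw [inner_toEuclideanCLM]
  exact dotProduct_centeredAdj_mulVec_le hn hd hX hκ hdisc hlight hx hy
    (sum_sq_le_one_of_mem_closedBall (hN hx)) (sum_sq_le_one_of_mem_closedBall (hN hy))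

end CenteredNorm

/-! ### The second singular value -/

section SecondSingularValue

open Finset Matrix Real
open scoped RealInnerProductSpace

lemma eigenvalue_le_of_forall_ker {E : Type*} [NormedAddCommGroup E] [InnerProductSpace ℝ E]
    {T : E →ₗ[ℝ] E} {a b : E} {lam μ c : ℝ} (ha : ‖a‖ = 1) (hb : ‖b‖ = 1) (hab : ⟪a, b⟫ = 0)
    (hTa : T a = μ • a) (hTb : T b = lam • b) (hle : lam ≤ μ) (φ : E →ₗ[ℝ] ℝ)
    (hφ : ∀ z, φ z = 0 → ⟪z, T z⟫ ≤ c * ‖z‖ ^ 2) : lam ≤ c := by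
  have hba : ⟪b, a⟫ = 0 := by rw [real_inner_comm, hab]
  have hcomb (s t : ℝ) (hst : φ (s • a + t • b) = 0) :
      s ^ 2 * μ + t ^ 2 * lam ≤ c * (s ^ 2 + t ^ 2) := by
    have := hφ _ hst
    rw [← real_inner_self_eq_norm_sq] at this
    simp only [map_add, map_smul, hTa, hTb, inner_add_left, inner_add_right, inner_smul_left,
      inner_smul_right, inner_self_eq_one_of_norm_eq_one ha, inner_self_eq_one_of_norm_eq_one hb,
      hab, hba, conj_trivial] at this
    linarith
  by_cases h : φ a = 0
  · linarith [hcomb 1 0 (by simp [h])]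
  · have := hcomb (-φ b) (φ a) (by simp only [map_add, map_smul, smul_eq_mul]; ring)
    have hpos : 0 < (-φ b) ^ 2 + φ a ^ 2 := by positivity
    refine le_of_mul_le_mul_right ?_ hpos
    linarith [mul_le_mul_of_nonneg_left hle (sq_nonneg (-φ b))]

lemma sqrt_eigenvalues_transpose_mul_self_le {n : Type*} [Fintype n] [DecidableEq n]
    {A : Matrix n n ℝ} (hH : (Aᵀ * A).IsHermitian) {i j : n} (hij : i ≠ j)
    (hle : hH.eigenvalues i ≤ hH.eigenvalues j) (φ : EuclideanSpace ℝ n →ₗ[ℝ] ℝ) {N : ℝ}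
    (hN : 0 ≤ N) (hφ : ∀ z, φ z = 0 → ‖toEuclideanCLM (𝕜 := ℝ) A z‖ ≤ N * ‖z‖) :
    √(hH.eigenvalues i) ≤ N := by
  have heig (k : n) : (toEuclideanCLM (𝕜 := ℝ) (Aᵀ * A)) (hH.eigenvectorBasis k) =
      hH.eigenvalues k • hH.eigenvectorBasis k := by
    apply WithLp.ofLp_injective
    rw [ofLp_toEuclideanCLM, hH.mulVec_eigenvectorBasis]
    rfl
  refine sqrt_le_iff.2 ⟨hN, eigenvalue_le_of_forall_ker
    (T := (toEuclideanCLM (𝕜 := ℝ) (Aᵀ * A)).toLinearMap) (hH.eigenvectorBasis.norm_eq_one j)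
    (hH.eigenvectorBasis.norm_eq_one i) (hH.eigenvectorBasis.orthonormal.2 hij.symm) (heig j)
    (heig i) hle φ fun z hz => ?_⟩
  calc ⟪z, toEuclideanCLM (𝕜 := ℝ) (Aᵀ * A) z⟫ = ‖toEuclideanCLM (𝕜 := ℝ) A z‖ ^ 2 := by
        rw [inner_toEuclideanCLM, ← mulVec_mulVec, dotProduct_mulVec, vecMul_transpose,
          ← ofLp_toEuclideanCLM, EuclideanSpace.real_norm_sq_eq]
        simp only [dotProduct, sq]
    _ ≤ (N * ‖z‖) ^ 2 := by gcongr; exact hφ z hz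
    _ = N ^ 2 * ‖z‖ ^ 2 := mul_pow _ _ _

variable {n d : ℕ}

lemma toEuclideanCLM_adjR_of_sum_eq_zero (d : ℕ) (X : Fin n → Fin n → Bool)
    {z : EuclideanSpace ℝ (Fin n)} (hz : ∑ u, z u = 0) :
    toEuclideanCLM (𝕜 := ℝ) (adjR X) z = toEuclideanCLM (𝕜 := ℝ) (centeredAdj d X) z := by
  have hconst : (of fun _ _ : Fin n => (d : ℝ) / n) *ᵥ z.ofLp = 0 := by
    ext u
    simp only [mulVec, dotProduct, of_apply, ← mul_sum, hz, mul_zero, Pi.zero_apply]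
  apply WithLp.ofLp_injective
  rw [ofLp_toEuclideanCLM, ofLp_toEuclideanCLM, centeredAdj, sub_mulVec, hconst, sub_zero]

lemma sqrt_eigenvalues_le_norm_centeredAdj {X : Fin n → Fin n → Bool}
    (hH : ((adjR X)ᵀ * adjR X).IsHermitian) {σ : Equiv.Perm (Fin n)}
    (hσ : Antitone fun i => hH.eigenvalues (σ i)) {i : Fin n} (hi : (i : ℕ) = 1) (d : ℕ) :
    √(hH.eigenvalues (σ i)) ≤ ‖toEuclideanCLM (𝕜 := ℝ) (centeredAdj d X)‖ := by
  have : NeZero n := ⟨i.pos.ne'⟩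
  have hi₀ : i ≠ 0 := fun h => by simp [h] at hi
  refine sqrt_eigenvalues_transpose_mul_self_le hH (σ.injective.ne hi₀) (hσ (Fin.zero_le i))
    (∑ u, EuclideanSpace.projₗ u) (norm_nonneg _) fun z hz => ?_
  rw [toEuclideanCLM_adjR_of_sum_eq_zero d X (by simpa using hz)]
  exact ContinuousLinearMap.le_opNorm _ z

lemma eight_mul_cube_le_sq (h : (d : ℝ) ≤ 1 / 2 * (n : ℝ) ^ (2 / 3 : ℝ)) :
    8 * d ^ 3 ≤ n ^ 2 := by
  have hcube : (8 * d ^ 3 : ℝ) ≤ n ^ 2 :=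
    calc (8 * d ^ 3 : ℝ) ≤ 8 * (1 / 2 * (n : ℝ) ^ (2 / 3 : ℝ)) ^ 3 := by gcongr
      _ = (n : ℝ) ^ (2 / 3 * (3 : ℕ) : ℝ) := by
        rw [rpow_mul_natCast (Nat.cast_nonneg n)]
        ring
      _ = n ^ 2 := by norm_num
  exact_mod_cast hcube

lemma one_sub_sub_le_card_filter_div {α : Type*} {s : Finset α} (hs : s.Nonempty)
    {p q r : α → Prop} [DecidablePred p] [DecidablePred q] [DecidablePred r] {a b : ℝ}
    (h : ∀ x ∈ s, p x → q x → r x) (hp : (#{x ∈ s | ¬p x} : ℝ) ≤ a * #s)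
    (hq : (#{x ∈ s | ¬q x} : ℝ) ≤ b * #s) : 1 - a - b ≤ (#{x ∈ s | r x} : ℝ) / #s := by
  have hcover : s ⊆ {x ∈ s | r x} ∪ ({x ∈ s | ¬p x} ∪ {x ∈ s | ¬q x}) := by
    intro x hx
    simp only [mem_union, mem_filter, hx, true_and]
    tauto
  have hcard : (#s : ℝ) ≤ #{x ∈ s | r x} + (#{x ∈ s | ¬p x} + #{x ∈ s | ¬q x}) := by
    exact_mod_cast (card_le_card hcover).trans <| (card_union_le _ _).trans <|
      Nat.add_le_add_left (card_union_le _ _) _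
  rw [le_div_iff₀ (Nat.cast_pos.2 hs.card_pos)]
  linarith

end SecondSingularValue

theorem second_singular_value_regular_digraph :
    ∀ K : ℝ, 0 < K → ∃ α : ℝ, 0 < α ∧
      ∀ (n d : ℕ), 0 < n → 0 < d →
        (d : ℝ) ≤ (1 / 2) * (n : ℝ) ^ ((2 : ℝ) / 3) →
        (RegDigraph n d).Nonempty →
        (1 : ℝ) - (n : ℝ) ^ (-K) - Real.exp (-(n : ℝ)) ≤
          (((RegDigraph n d).filter fun X =>
              ∀ (hH : ((adjR X).transpose * adjR X).IsHermitian)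
                (σ : Equiv.Perm (Fin n)),
                Antitone (fun i => hH.eigenvalues (σ i)) →
                ∀ i : Fin n, (i : ℕ) = 1 →
                  Real.sqrt (hH.eigenvalues (σ i)) ≤ α * Real.sqrt d).card : ℝ) /
            ((RegDigraph n d).card : ℝ) := by
  intro K hK
  refine ⟨4 * (93 + 4 * (306 + 32 * (8 * (K + 4)))), by positivity, fun n d hn hd hdn hne => ?_⟩
  have hcube := eight_mul_cube_le_sq hdn
  obtain ⟨N, hNcard, hN, hcover⟩ := exists_finset_isCover_half (EuclideanSpace ℝ (Fin n))
  rw [finrank_euclideanSpace_fin] at hNcard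
  have hdisc := card_filter_not_hasDiscrepancy_le hn hd (eight_mul_le_three_mul hd hcube) hK.le
  have hlight := card_filter_not_hasLightBound_le hd hcube hN hNcard
  refine one_sub_sub_le_card_filter_div hne (fun X hX hXdisc hXlight => ?_) hdisc hlight
  intro hH σ hσ i hi
  exact (sqrt_eigenvalues_le_norm_centeredAdj hH hσ hi d).trans
    (norm_toEuclideanCLM_centeredAdj_le hn hd hX (by positivity) hXdisc hN hcover hXlight)
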